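/- Let U be a squared four-dimensional Bessel process started at 0, Ū(t) := sup_{s ∈ [0,t]} U(s), and τ₁^U := inf{ t ≥ 0 : Ū(t) − U(t) ≥ 1 }. Then for every b > 1, P{ Ū(τ₁^U) > b } = b e^{−(b−1)}. -/

import Mathlib

open MeasureTheory ProbabilityTheory Real Set Filter

noncomputable section

variable {Ω : Type*} [MeasurableSpace Ω]

/-- A standard one-dimensional Brownian motion (indexed by `ℝ`, with the relevant
properties required for nonnegative times): starts at `0`, has continuous paths,
independent increments, and Gaussian increments of variance `t - s`. -/
structure IsStdBM (P : Measure Ω) (B : ℝ → Ω → ℝ) : Prop where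
  measurable : ∀ t : ℝ, Measurable (B t)
  start : ∀ ω, B 0 ω = 0
  cont : ∀ ω, Continuous fun t => B t ω
  indep : ∀ (n : ℕ) (t : Fin (n + 1) → ℝ), (∀ i, 0 ≤ t i) → Monotone t →
    iIndepFun
      (fun (i : Fin n) ω => B (t i.succ) ω - B (t i.castSucc) ω) P
  gauss : ∀ s t : ℝ, 0 ≤ s → s ≤ t →
    P.map (fun ω => B t ω - B s ω) = gaussianReal 0 (Real.toNNReal (t - s))

/-- A standard `d`-dimensional Brownian motion started at `0`: the coordinate
processes are independent standard one-dimensional Brownian motions. -/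
structure IsStdBMVec (d : ℕ) (P : Measure Ω) (B : ℝ → Ω → EuclideanSpace ℝ (Fin d)) : Prop where
  coord : ∀ i : Fin d, IsStdBM P (fun t ω => B t ω i)
  indepCoord : iIndepFun
    (fun (i : Fin d) ω => fun t : ℝ => B t ω i) P

/-- Last zero of `W` in `[0,1]`. -/
def lastZero (W : ℝ → Ω → ℝ) (ω : Ω) : ℝ := sSup {t ∈ Icc (0:ℝ) 1 | W t ω = 0}

/-- `m` is a standard Brownian meander: obtained from a Brownian motion `W` by
`m s = |W (g + s (1 - g))| / √(1 - g)`, where `g` is the last zero of `W` before time `1`. -/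
def IsBrownianMeander (P : Measure Ω) (m : ℝ → Ω → ℝ) : Prop :=
  ∃ W : ℝ → Ω → ℝ, IsStdBM P W ∧
    ∀ ω, ∀ s ∈ Icc (0:ℝ) 1,
      m s ω = |W (lastZero W ω + s * (1 - lastZero W ω)) ω| / Real.sqrt (1 - lastZero W ω)

/-- Running maximum `X̄(t) = sup_{s ∈ [0,t]} X(s)`. -/
def runMax (X : ℝ → Ω → ℝ) (t : ℝ) (ω : Ω) : ℝ := ⨆ s : Icc (0:ℝ) t, X s ω

/-- Maximal drawdown on `[0,T]` : `sup_{s ∈ [0,T]} (X̄(s) - X(s))`. -/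
def maxDDOn (X : ℝ → Ω → ℝ) (T : ℝ) (ω : Ω) : ℝ := ⨆ s : Icc (0:ℝ) T, (runMax X s ω - X s ω)

/-- Drawdown time `τ_λ^X := inf {t ≥ 0 : X̄(t) - X(t) ≥ λ}`. -/
def ddTime (lam : ℝ) (X : ℝ → Ω → ℝ) (ω : Ω) : ℝ :=
  sInf {t | 0 ≤ t ∧ lam ≤ runMax X t ω - X t ω}

/-- Three-dimensional Bessel process built from a 3-dimensional Brownian motion. -/
def bessel3 (β : ℝ → Ω → EuclideanSpace ℝ (Fin 3)) (t : ℝ) (ω : Ω) : ℝ := ‖β t ω‖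

/-- Squared four-dimensional Bessel process built from a 4-dimensional Brownian motion. -/
def sqBessel4 (γ : ℝ → Ω → EuclideanSpace ℝ (Fin 4)) (t : ℝ) (ω : Ω) : ℝ := ‖γ t ω‖ ^ 2

end

open scoped ENNReal

open scoped NNReal Topology
set_option linter.unusedSectionVars false

/-- one-dimensional Gaussian integral -/
lemma gauss_one (r x : ℝ) (v : ℝ≥0) (hr : 0 ≤ r) (hv : v ≠ 0) :
    ∫ y, Real.exp (-(r * (x + y) ^ 2)) ∂(gaussianReal 0 v)
      = (√(1 + 2 * r * v))⁻¹ * Real.exp (-(r / (1 + 2 * r * v) * x ^ 2)) := by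
  have hv0 : (0 : ℝ) < v := by positivity
  have hq : (0 : ℝ) < 1 + 2 * r * v := by positivity
  rw [integral_gaussianReal_eq_integral_smul hv]
  set c : ℝ := (1 + 2 * r * v) / (2 * v) with hc
  have hc0 : 0 < c := by positivity
  set d : ℝ := 2 * r * v * x / (1 + 2 * r * v) with hd
  have key : ∀ y : ℝ, gaussianPDFReal 0 v y • Real.exp (-(r * (x + y) ^ 2))
      = ((√(2 * π * v))⁻¹ * Real.exp (-(r / (1 + 2 * r * v) * x ^ 2)))
        * Real.exp (-c * (y + d) ^ 2) := by
    intro y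
    rw [gaussianPDFReal, smul_eq_mul, mul_assoc, ← Real.exp_add,
      mul_assoc (√(2 * π * v))⁻¹ (Real.exp _) (Real.exp _), ← Real.exp_add]
    congr 2
    rw [hc, hd]
    field_simp
    ring
  simp_rw [key]
  rw [integral_const_mul, integral_add_right_eq_self (fun y => Real.exp (-c * y ^ 2)) d,
    integral_gaussian]
  have : √(π / c) = √(2 * π * v) * (√(1 + 2 * r * v))⁻¹ := by
    rw [← Real.sqrt_inv, ← Real.sqrt_mul (by positivity)]
    congr 1
    rw [hc]
    field_simp
  rw [this]
  have : √(2 * π * v) ≠ 0 := by positivity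
  field_simp

/-- past sigma-algebra up to time `s` -/
@[reducible] def pastF {Ω : Type*} (γ : ℝ → Ω → EuclideanSpace ℝ (Fin 4)) (s : ℝ) :
    MeasurableSpace Ω :=
  MeasurableSpace.comap (fun ω (p : Fin 4 × Icc (0 : ℝ) s) => γ p.2 ω p.1) MeasurableSpace.pi

section A
variable {Ω : Type*} [mΩ : MeasurableSpace Ω] {P : Measure Ω} [IsProbabilityMeasure P]
  {γ : ℝ → Ω → EuclideanSpace ℝ (Fin 4)}

lemma IsStdBM.pre {B : ℝ → Ω → ℝ} (hB : IsStdBM P B) :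
    IsPreBrownianReal (fun (t : ℝ≥0) ω => B t ω) P := by
  apply HasIndepIncrements.isPreBrownianReal_of_hasLaw
  · intro t
    refine ⟨(hB.measurable t).aemeasurable, ?_⟩
    have := hB.gauss 0 t le_rfl t.2
    simpa [hB.start] using this
  · intro n t ht
    exact hB.indep n (fun i => (t i : ℝ)) (fun i => (t i).2) (fun i j h => ht h)

lemma IsStdBM.indep_past {B : ℝ → Ω → ℝ} (hB : IsStdBM P B) {s δ : ℝ} (hs : 0 ≤ s) (hδ : 0 ≤ δ) :
    IndepFun (fun ω (r : Icc (0:ℝ) s) => B r ω) (fun ω => B (s + δ) ω - B s ω) P := by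
  have h := (hB.pre.indepFun_shift ⟨s, hs⟩).symm
  have h2 := h.comp (φ := fun f (r : Icc (0:ℝ) s) => f ⟨⟨r, r.2.1⟩, r.2.2⟩)
    (ψ := fun g => g ⟨δ, hδ⟩) (measurable_pi_lambda _ fun r => measurable_pi_apply _)
    (measurable_pi_apply (X := fun _ : ℝ≥0 => ℝ) (⟨δ, hδ⟩ : ℝ≥0))
  exact h2

lemma coord_measurable (hγ : IsStdBMVec 4 P γ) (t : ℝ) (i : Fin 4) :
    Measurable (fun ω => γ t ω i) := (hγ.coord i).measurable t

lemma pastF_coord {s r : ℝ} (h0 : 0 ≤ r) (h : r ≤ s) (i : Fin 4) :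
    Measurable[pastF γ s] (fun ω => γ r ω i) := by
  have h1 := comap_measurable (m := MeasurableSpace.pi)
    (fun ω (p : Fin 4 × Icc (0 : ℝ) s) => γ p.2 ω p.1)
  exact (measurable_pi_apply (⟨i, ⟨r, h0, h⟩⟩ : Fin 4 × Icc (0:ℝ) s)).comp h1

lemma pastF_le (hγ : IsStdBMVec 4 P γ) (s : ℝ) : pastF γ s ≤ mΩ := by
  apply Measurable.comap_le
  exact measurable_pi_lambda _ fun p => coord_measurable hγ _ _

lemma indep_vec (hγ : IsStdBMVec 4 P γ) {s δ : ℝ} (hs : 0 ≤ s) (hδ : 0 ≤ δ) :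
    IndepFun (fun ω (p : Fin 4 × Icc (0 : ℝ) s) => γ p.2 ω p.1)
      (fun ω (i : Fin 4) => γ (s + δ) ω i - γ s ω i) P := by
  let X : (i : Fin 4) → (j : Bool) → Ω → (Icc (0:ℝ) s → ℝ) := fun i j ω r =>
    if j then γ (s + δ) ω i - γ s ω i else γ r ω i
  have mX : ∀ i j, Measurable (X i j) := by
    intro i j
    refine measurable_pi_lambda _ fun p => ?_
    cases j
    · simpa [X] using coord_measurable hγ _ _
    · simpa [X] using (coord_measurable hγ (s + δ) i).fun_sub (coord_measurable hγ s i)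
  have h1 : iIndepFun (fun i ω => (X i · ω)) P := by
    let F : (i : Fin 4) → (ℝ → ℝ) → (j : Bool) → (Icc (0:ℝ) s → ℝ) := fun i f j r =>
      if j then f (s + δ) - f s else f r
    have hF : ∀ i, Measurable (F i) := by
      intro i
      refine measurable_pi_lambda _ fun j => measurable_pi_lambda _ fun r => ?_
      cases j
      · simpa [F] using measurable_pi_apply (X := fun _ : ℝ => ℝ) (r : ℝ)
      · simpa [F] using (measurable_pi_apply (X := fun _ : ℝ => ℝ) (s + δ)).fun_sub
          (measurable_pi_apply (X := fun _ : ℝ => ℝ) s)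
    exact hγ.indepCoord.comp F hF
  have h2 : ∀ i, iIndepFun (X i) P := by
    intro i
    have h := ((hγ.coord i).indep_past hs hδ).comp (φ := id)
      (ψ := fun x => (fun _ : Icc (0:ℝ) s => x)) measurable_id
      (measurable_pi_lambda _ fun r => measurable_id)
    rw [iIndepFun_iff_measure_inter_preimage_eq_mul]
    intro S sets hsets
    have hT := h.measure_inter_preimage_eq_mul
    have key : ∀ S : Finset Bool, S = ∅ ∨ S = {true} ∨ S = {false} ∨ S = {false, true} := by decide
    rcases key S with rfl | rfl | rfl | rfl
    · simp
    · simp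
    · simp
    · have a := hT (sets false) (sets true) (hsets false (by simp)) (hsets true (by simp))
      rw [Finset.prod_pair (by simp)]
      have e1 : X i false = id ∘ fun ω (r : Icc (0:ℝ) s) => γ r ω i := by
        funext ω r; simp [X]
      have e2 : X i true = (fun x => (fun _ : Icc (0:ℝ) s => x)) ∘
          fun ω => γ (s + δ) ω i - γ s ω i := by
        funext ω r; simp [X]
      rw [e1, e2, ← a, ← e1, ← e2]
      congr 1
      ext ω
      simp
  have h3 := iIndepFun_uncurry' mX h1 h2
  let S : Finset (Fin 4 × Bool) := Finset.univ.filter (fun p => p.2 = false)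
  let T : Finset (Fin 4 × Bool) := Finset.univ.filter (fun p => p.2 = true)
  have hST : Disjoint S T := by
    rw [Finset.disjoint_left]; intro p; simp only [S, T, Finset.mem_filter]; rintro ⟨_, h⟩ ⟨_, h'⟩
    simp [h] at h'
  have h4 := h3.indepFun_finset S T hST (fun p => mX p.1 p.2)
  let φ : (S → (Icc (0:ℝ) s → ℝ)) → (Fin 4 × Icc (0:ℝ) s → ℝ) := fun f p =>
    f ⟨⟨p.1, false⟩, by simp [S]⟩ p.2
  let ψ : (T → (Icc (0:ℝ) s → ℝ)) → (Fin 4 → ℝ) := fun f i =>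
    f ⟨⟨i, true⟩, by simp [T]⟩ ⟨0, le_rfl, hs⟩
  have hφ : Measurable φ := by
    refine measurable_pi_lambda _ fun p => ?_
    exact (measurable_pi_apply (X := fun _ : Icc (0:ℝ) s => ℝ) p.2).comp (measurable_pi_apply _)
  have hψ : Measurable ψ := by
    refine measurable_pi_lambda _ fun i => ?_
    exact (measurable_pi_apply (X := fun _ : Icc (0:ℝ) s => ℝ) _).comp (measurable_pi_apply _)
  have h5 := h4.comp hφ hψ
  convert h5 using 1
  · funext ω p; simp [φ, X]
  · funext ω p; simp [ψ, X]

lemma incr_law (hγ : IsStdBMVec 4 P γ) {s δ : ℝ} (hs : 0 ≤ s) (hδ : 0 ≤ δ) :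
    P.map (fun ω (i : Fin 4) => γ (s + δ) ω i - γ s ω i)
      = Measure.pi (fun _ : Fin 4 => gaussianReal 0 (Real.toNNReal δ)) := by
  have h : iIndepFun (fun (i : Fin 4) ω => γ (s + δ) ω i - γ s ω i) P :=
    hγ.indepCoord.comp (fun _ (f : ℝ → ℝ) => f (s + δ) - f s)
      (fun i => (measurable_pi_apply (X := fun _ : ℝ => ℝ) (s + δ)).fun_sub
          (measurable_pi_apply (X := fun _ : ℝ => ℝ) s))
  rw [h.map_fun_eq_pi_map
    (fun i => ((coord_measurable hγ (s + δ) i).fun_sub (coord_measurable hγ s i)).aemeasurable)]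
  congr 1
  funext i
  have := (hγ.coord i).gauss s (s + δ) hs (by linarith)
  simpa using this

lemma sq_eq_sum (t : ℝ) (ω : Ω) : sqBessel4 γ t ω = ∑ i, (γ t ω i) ^ 2 := by
  rw [sqBessel4, EuclideanSpace.norm_sq_eq]
  simp

lemma sq_nonneg' (t : ℝ) (ω : Ω) : 0 ≤ sqBessel4 γ t ω := by
  unfold sqBessel4; positivity

lemma sq_pastF {s r : ℝ} (h0 : 0 ≤ r) (h : r ≤ s) :
    Measurable[pastF γ s] (sqBessel4 γ r) := by
  have : sqBessel4 γ r = fun ω => ∑ i, (γ r ω i) ^ 2 := by funext ω; exact sq_eq_sum r ω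
  rw [this]
  have hm := fun i => pastF_coord (γ := γ) h0 h i
  exact Finset.measurable_fun_sum _ fun i _ => (hm i).pow_const 2

lemma sq_meas (hγ : IsStdBMVec 4 P γ) (t : ℝ) : Measurable (sqBessel4 γ t) := by
  have : sqBessel4 γ t = fun ω => ∑ i, (γ t ω i) ^ 2 := by funext ω; exact sq_eq_sum t ω
  rw [this]
  exact Finset.measurable_fun_sum _ fun i _ => (coord_measurable hγ t i).pow_const 2

lemma sq_cont (hγ : IsStdBMVec 4 P γ) (ω : Ω) : Continuous (fun t => sqBessel4 γ t ω) := by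
  have : (fun t => sqBessel4 γ t ω) = fun t => ∑ i, (γ t ω i) ^ 2 := by
    funext t; exact sq_eq_sum t ω
  rw [this]
  exact continuous_finsetSum _ fun i _ => ((hγ.coord i).cont ω).pow 2

lemma sq_zero (hγ : IsStdBMVec 4 P γ) (ω : Ω) : sqBessel4 γ 0 ω = 0 := by
  rw [sq_eq_sum]
  simp [(hγ.coord _).start ω]

lemma pi_gauss (r : ℝ) (hr : 0 ≤ r) (v : ℝ≥0) (hv : v ≠ 0) (x : Fin 4 → ℝ) :
    ∫ y : Fin 4 → ℝ, Real.exp (-(r * ∑ i, (x i + y i) ^ 2))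
      ∂(Measure.pi (fun _ : Fin 4 => gaussianReal 0 v))
    = ((1 + 2 * r * v) ^ 2)⁻¹ * Real.exp (-(r / (1 + 2 * r * v) * ∑ i, x i ^ 2)) := by
  have e : ∀ y : Fin 4 → ℝ, Real.exp (-(r * ∑ i, (x i + y i) ^ 2))
      = ∏ i, Real.exp (-(r * (x i + y i) ^ 2)) := by
    intro y
    rw [← Real.exp_sum, Finset.mul_sum, Finset.sum_neg_distrib]
  simp_rw [e]
  rw [integral_fintype_prod_eq_prod (fun i y => Real.exp (-(r * (x i + y) ^ 2)))]
  simp_rw [gauss_one r _ v hr hv]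
  rw [Finset.prod_mul_distrib, ← Real.exp_sum, Finset.mul_sum, Finset.sum_neg_distrib]
  congr 1
  have : (0:ℝ) ≤ 1 + 2 * r * v := by positivity
  simp only [Finset.prod_const, Finset.card_univ, Fintype.card_fin]
  rw [inv_pow]
  congr 1
  rw [show (√(1 + 2 * r * v)) ^ 4 = ((√(1 + 2 * r * v)) ^ 2) ^ 2 by ring, Real.sq_sqrt this]

lemma laplace_step (hγ : IsStdBMVec 4 P γ) {s δ : ℝ} (hs : 0 ≤ s) (hδ : 0 < δ)
    {ξ : Ω → ℝ} (hξ : Measurable[pastF γ s] ξ) {C : ℝ} (hC : ∀ ω, |ξ ω| ≤ C)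
    {r : ℝ} (hr : 0 ≤ r) :
    ∫ ω, ξ ω * Real.exp (-(r * sqBessel4 γ (s + δ) ω)) ∂P
      = ((1 + 2 * r * δ) ^ 2)⁻¹ *
        ∫ ω, ξ ω * Real.exp (-(r / (1 + 2 * r * δ) * sqBessel4 γ s ω)) ∂P := by
  set Y : Ω → Fin 4 → ℝ := fun ω i => γ (s + δ) ω i - γ s ω i with hY
  set Z : Ω → ℝ × (Fin 4 → ℝ) := fun ω => (ξ ω, fun i => γ s ω i) with hZ
  have hZp : Measurable[pastF γ s] Z :=
    Measurable.prodMk (m := pastF γ s) hξ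
      (@measurable_pi_lambda _ _ _ (pastF γ s) _ _ fun i => pastF_coord hs le_rfl i)
  have hZm : Measurable Z := hZp.mono (pastF_le hγ s) le_rfl
  have hYm : Measurable Y := measurable_pi_lambda _ fun i =>
    (coord_measurable hγ _ _).sub (coord_measurable hγ _ _)
  have hind : IndepFun Z Y P := by
    have h := indep_vec hγ hs hδ.le
    rw [IndepFun_iff_Indep] at h ⊢
    exact indep_of_indep_of_le_left h hZp.comap_le
  have hlaw : P.map Y = Measure.pi (fun _ : Fin 4 => gaussianReal 0 (Real.toNNReal δ)) :=
    incr_law hγ hs hδ.le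
  have hv : Real.toNNReal δ ≠ 0 := by simpa using hδ
  have hprod := (indepFun_iff_map_prod_eq_prod_map_map hZm.aemeasurable hYm.aemeasurable).1 hind
  let H : (ℝ × (Fin 4 → ℝ)) × (Fin 4 → ℝ) → ℝ := fun p =>
    p.1.1 * Real.exp (-(r * ∑ i, (p.1.2 i + p.2 i) ^ 2))
  have hH : Measurable H := by
    apply Measurable.mul (by fun_prop)
    apply Measurable.exp
    apply Measurable.neg
    apply Measurable.const_mul
    exact Finset.measurable_fun_sum _ fun i _ => by fun_prop
  have e1 : ∀ ω, ξ ω * Real.exp (-(r * sqBessel4 γ (s + δ) ω)) = H (Z ω, Y ω) := by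
    intro ω
    simp only [H, Z, Y, sq_eq_sum]
    congr 5
    funext i
    ring
  have hexp1 : ∀ ω, |Real.exp (-(r * sqBessel4 γ (s + δ) ω))| ≤ 1 := by
    intro ω
    rw [abs_of_pos (Real.exp_pos _), Real.exp_le_one_iff]
    have := mul_nonneg hr (sq_nonneg' (γ := γ) (s + δ) ω)
    linarith
  have hint : Integrable (fun ω => H (Z ω, Y ω)) P := by
    refine Integrable.of_bound (C := C) (hH.comp (hZm.prodMk hYm)).aestronglyMeasurable ?_
    refine Eventually.of_forall fun ω => ?_
    rw [← e1, Real.norm_eq_abs, abs_mul]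
    have := hC ω
    have := hexp1 ω
    have := abs_nonneg (ξ ω)
    nlinarith
  have hint2 : Integrable H ((P.map Z).prod (P.map Y)) := by
    rw [← hprod]
    exact (integrable_map_measure hH.aestronglyMeasurable (hZm.prodMk hYm).aemeasurable).2 hint
  simp_rw [e1]
  have e2 : ∫ ω, H (Z ω, Y ω) ∂P = ∫ p, H p ∂(P.map (fun ω => (Z ω, Y ω))) :=
    (integral_map (hZm.prodMk hYm).aemeasurable hH.aestronglyMeasurable).symm
  have hpm : IsProbabilityMeasure (P.map Z) := Measure.isProbabilityMeasure_map hZm.aemeasurable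
  have hpm : IsProbabilityMeasure (P.map Y) := Measure.isProbabilityMeasure_map hYm.aemeasurable
  rw [e2, hprod, integral_prod _ hint2]
  have e3 : ∀ z : ℝ × (Fin 4 → ℝ), ∫ y, H (z, y) ∂(P.map Y)
      = ((1 + 2 * r * δ) ^ 2)⁻¹ *
        (z.1 * Real.exp (-(r / (1 + 2 * r * δ) * ∑ i, z.2 i ^ 2))) := by
    intro z
    simp only [H]
    rw [integral_const_mul, hlaw, pi_gauss r hr _ hv, Real.coe_toNNReal _ hδ.le]
    ring
  simp_rw [e3]
  rw [integral_const_mul, integral_map hZm.aemeasurable]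
  · congr 2
    funext ω
    simp only [Z, sq_eq_sum]
  · apply Measurable.aestronglyMeasurable
    apply Measurable.mul (by fun_prop)
    apply Measurable.exp
    apply Measurable.neg
    apply Measurable.const_mul
    exact Finset.measurable_fun_sum _ fun i _ => by fun_prop

end A

/-- truncated version of `1/u` -/
noncomputable def phi (K u : ℝ) : ℝ := ∫ r in (0:ℝ)..K, Real.exp (-(r * u))

lemma phi_ii (u a c : ℝ) : IntervalIntegrable (fun r => Real.exp (-(r * u))) volume a c :=
  Continuous.intervalIntegrable (by fun_prop) _ _

lemma phi_cont (K : ℝ) : Continuous (phi K) := by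
  unfold phi
  apply intervalIntegral.continuous_parametric_intervalIntegral_of_continuous'
  fun_prop

lemma phi_mul (K u : ℝ) : u * phi K u = 1 - Real.exp (-(K * u)) := by
  unfold phi
  rw [← intervalIntegral.integral_const_mul]
  have := intervalIntegral.integral_eq_sub_of_hasDerivAt (a := 0) (b := K)
    (f := fun r => -Real.exp (-(r * u))) (f' := fun r => u * Real.exp (-(r * u))) ?_ ?_
  · rw [this]; simp; ring
  · intro x _
    have h : HasDerivAt (fun r : ℝ => -(r * u)) (-u) x := by
      simpa using ((hasDerivAt_id x).mul_const u).fun_neg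
    have := h.exp.fun_neg
    convert this using 1
    ring
  · exact Continuous.intervalIntegrable (by fun_prop) _ _

lemma phi_zero (K : ℝ) : phi K 0 = K := by simp [phi]

lemma phi_nonneg {K : ℝ} (hK : 0 ≤ K) (u : ℝ) : 0 ≤ phi K u :=
  intervalIntegral.integral_nonneg hK fun r _ => (Real.exp_pos _).le

lemma phi_anti {K u v : ℝ} (hK : 0 ≤ K) (h : u ≤ v) : phi K v ≤ phi K u := by
  apply intervalIntegral.integral_mono_on hK (phi_ii _ _ _) (phi_ii _ _ _)
  intro r hr
  apply Real.exp_le_exp.2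
  have := mul_le_mul_of_nonneg_left h hr.1
  linarith

lemma phi_le {K u : ℝ} (hK : 0 ≤ K) (hu : 0 ≤ u) : phi K u ≤ K := by
  have := phi_anti hK hu
  rwa [phi_zero] at this

lemma phi_lip1 {K u v : ℝ} (hK : 0 ≤ K) (hu : 0 ≤ u) (h : u ≤ v) :
    phi K u - phi K v ≤ K ^ 2 * (v - u) := by
  unfold phi
  rw [← intervalIntegral.integral_sub (phi_ii _ _ _) (phi_ii _ _ _)]
  have : K ^ 2 * (v - u) = ∫ r in (0:ℝ)..K, K * (v - u) := by
    rw [intervalIntegral.integral_const]; simp; ring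
  rw [this]
  apply intervalIntegral.integral_mono_on hK ((phi_ii _ _ _).sub (phi_ii _ _ _)) (by simp)
  intro r hr
  have h1 : Real.exp (-(r * v)) = Real.exp (-(r * u)) * Real.exp (-(r * (v - u))) := by
    rw [← Real.exp_add]; congr 1; ring
  have h2 : 1 - r * (v - u) ≤ Real.exp (-(r * (v - u))) := by
    have := Real.add_one_le_exp (-(r * (v - u))); linarith
  have h3 : Real.exp (-(r * u)) ≤ 1 := by
    rw [Real.exp_le_one_iff]; have := mul_nonneg hr.1 hu; linarith
  have h4 : 0 < Real.exp (-(r * u)) := Real.exp_pos _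
  have h5 : 0 ≤ r * (v - u) := mul_nonneg hr.1 (by linarith)
  have h6 : r * (v - u) ≤ K * (v - u) := mul_le_mul_of_nonneg_right hr.2 (by linarith)
  rw [h1]
  nlinarith

lemma phi_lip {K u v : ℝ} (hK : 0 ≤ K) (hu : 0 ≤ u) (hv : 0 ≤ v) :
    |phi K u - phi K v| ≤ K ^ 2 * |u - v| := by
  rcases le_total u v with h | h
  · rw [abs_of_nonneg (by have := phi_anti hK h; linarith), abs_of_nonpos (by linarith)]
    have := phi_lip1 hK hu h
    linarith
  · rw [abs_of_nonpos (by have := phi_anti hK h; linarith), abs_of_nonneg (by linarith)]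
    have := phi_lip1 hK hv h
    linarith

lemma phi_sub_nonneg {K K' : ℝ} (h : K' ≤ K) (u : ℝ) : phi K' u ≤ phi K u := by
  have : phi K u - phi K' u = ∫ r in K'..K, Real.exp (-(r * u)) := by
    unfold phi
    rw [intervalIntegral.integral_interval_sub_left (phi_ii _ _ _) (phi_ii _ _ _)]
  have h2 : 0 ≤ ∫ r in K'..K, Real.exp (-(r * u)) :=
    intervalIntegral.integral_nonneg h fun r _ => (Real.exp_pos _).le
  linarith

lemma phi_sub_le {K K' u ε : ℝ} (h0 : 0 ≤ K') (h : K' ≤ K) (he : 0 ≤ ε) (hu : ε ≤ u) :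
    phi K u - phi K' u ≤ (K - K') * Real.exp (-(K' * ε)) := by
  have : phi K u - phi K' u = ∫ r in K'..K, Real.exp (-(r * u)) := by
    unfold phi
    rw [intervalIntegral.integral_interval_sub_left (phi_ii _ _ _) (phi_ii _ _ _)]
  rw [this]
  have e : (K - K') * Real.exp (-(K' * ε)) = ∫ r in K'..K, Real.exp (-(K' * ε)) := by
    rw [intervalIntegral.integral_const]; simp
  rw [e]
  apply intervalIntegral.integral_mono_on h (phi_ii _ _ _) (by simp)
  intro r hr
  apply Real.exp_le_exp.2
  have h1 : K' * ε ≤ r * ε := mul_le_mul_of_nonneg_right hr.1 he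
  have h2 : r * ε ≤ r * u := mul_le_mul_of_nonneg_left hu (h0.trans hr.1)
  linarith

lemma phi_subst {K δ : ℝ} (hK : 0 ≤ K) (hδ : 0 < δ) (u : ℝ) :
    ∫ r in (0:ℝ)..K, ((1 + 2 * r * δ) ^ 2)⁻¹ * Real.exp (-(r / (1 + 2 * r * δ) * u))
      = phi (K / (1 + 2 * K * δ)) u := by
  have hpos : ∀ x ∈ uIcc (0:ℝ) K, 0 < 1 + 2 * x * δ := by
    intro x hx
    rw [uIcc_of_le hK] at hx
    have := mul_nonneg hx.1 hδ.le
    linarith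
  have := intervalIntegral.integral_comp_mul_deriv (a := 0) (b := K)
    (f := fun r => r / (1 + 2 * r * δ)) (f' := fun r => ((1 + 2 * r * δ) ^ 2)⁻¹)
    (g := fun r => Real.exp (-(r * u))) ?_ ?_ (by fun_prop)
  · unfold phi
    simp only [zero_div] at this
    rw [← this]
    congr 1
    funext r
    simp only [Function.comp]
    ring
  · intro x hx
    have h := hpos x hx
    have h1 : HasDerivAt (fun r : ℝ => 1 + 2 * r * δ) (2 * δ) x := by
      simpa using (((hasDerivAt_id x).const_mul 2).mul_const δ).const_add 1
    have := (hasDerivAt_id' x).fun_div h1 h.ne'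
    refine this.congr_deriv ?_
    field_simp
    ring
  · intro x hx
    have h := hpos x hx
    apply ContinuousAt.continuousWithinAt
    apply ContinuousAt.inv₀ (by fun_prop)
    positivity

lemma phi_abs {K u : ℝ} (hK : 0 ≤ K) (hu : 0 ≤ u) : |phi K u| ≤ K := by
  rw [abs_of_nonneg (phi_nonneg hK u)]; exact phi_le hK hu

section B
variable {Ω : Type*} [mΩ : MeasurableSpace Ω] {P : Measure Ω} [IsProbabilityMeasure P]
  {γ : ℝ → Ω → EuclideanSpace ℝ (Fin 4)}

lemma fubini_aux {h : ℝ → Ω → ℝ} (hm : Measurable (Function.uncurry h)) {C K : ℝ} (hK : 0 ≤ K)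
    (hC : ∀ r, 0 ≤ r → ∀ ω, |h r ω| ≤ C) :
    ∫ ω, (∫ r in (0:ℝ)..K, h r ω) ∂P = ∫ r in (0:ℝ)..K, (∫ ω, h r ω ∂P) := by
  have e : ∀ f : ℝ → ℝ, ∫ r in (0:ℝ)..K, f r = ∫ r in (0:ℝ)..K, f (max r 0) := by
    intro f
    apply intervalIntegral.integral_congr
    intro r hr
    rw [uIcc_of_le hK] at hr
    simp [max_eq_left hr.1]
  rw [e (fun r => ∫ ω, h r ω ∂P)]
  simp_rw [fun ω => e (fun r => h r ω)]
  simp_rw [intervalIntegral.integral_of_le hK]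
  apply integral_integral_swap
  refine Integrable.of_bound (C := C) ?_ ?_
  · apply Measurable.aestronglyMeasurable
    have : Measurable (fun p : Ω × ℝ => (max p.2 0, p.1)) := by fun_prop
    exact hm.comp this
  · refine Eventually.of_forall fun p => ?_
    exact hC _ (le_max_right _ _) _

lemma phi_step (hγ : IsStdBMVec 4 P γ) {s δ : ℝ} (hs : 0 ≤ s) (hδ : 0 < δ)
    {ξ : Ω → ℝ} (hξ : Measurable[pastF γ s] ξ) {C : ℝ} (hC : ∀ ω, |ξ ω| ≤ C)
    {K : ℝ} (hK : 0 ≤ K) :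
    ∫ ω, ξ ω * phi K (sqBessel4 γ (s + δ) ω) ∂P
      = ∫ ω, ξ ω * phi (K / (1 + 2 * K * δ)) (sqBessel4 γ s ω) ∂P := by
  have hξm : Measurable ξ := hξ.mono (pastF_le hγ s) le_rfl
  have hU1 := sq_meas hγ (s + δ)
  have hU0 := sq_meas hγ s
  have hb : ∀ (t r : ℝ) (ω : Ω), 0 ≤ r → Real.exp (-(r * sqBessel4 γ t ω)) ≤ 1 := by
    intro t r ω hr
    rw [Real.exp_le_one_iff]
    have := mul_nonneg hr (sq_nonneg' (γ := γ) t ω)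
    linarith
  calc ∫ ω, ξ ω * phi K (sqBessel4 γ (s + δ) ω) ∂P
      = ∫ ω, (∫ r in (0:ℝ)..K, ξ ω * Real.exp (-(r * sqBessel4 γ (s + δ) ω))) ∂P := by
        congr 1; funext ω; rw [intervalIntegral.integral_const_mul, phi]
    _ = ∫ r in (0:ℝ)..K, ∫ ω, ξ ω * Real.exp (-(r * sqBessel4 γ (s + δ) ω)) ∂P := by
        refine fubini_aux (C := C) ?_ hK ?_
        · simp only [Function.uncurry_def]
          have h1 : Measurable (fun p : ℝ × Ω => ξ p.2) := hξm.comp measurable_snd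
          have h2 : Measurable (fun p : ℝ × Ω => sqBessel4 γ (s + δ) p.2) :=
            hU1.comp measurable_snd
          exact h1.mul ((measurable_fst.mul h2).neg.exp)
        · intro r hr ω
          rw [abs_mul, abs_of_pos (Real.exp_pos _)]
          have := hC ω
          have := hb (s + δ) r ω hr
          have := abs_nonneg (ξ ω)
          nlinarith
    _ = ∫ r in (0:ℝ)..K, ∫ ω, ξ ω * (((1 + 2 * r * δ) ^ 2)⁻¹ *
          Real.exp (-(r / (1 + 2 * r * δ) * sqBessel4 γ s ω))) ∂P := by
        apply intervalIntegral.integral_congr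
        intro r hr
        rw [uIcc_of_le hK] at hr
        simp only
        rw [laplace_step hγ hs hδ hξ hC hr.1, ← integral_const_mul]
        congr 1; funext ω; ring
    _ = ∫ ω, (∫ r in (0:ℝ)..K, ξ ω * (((1 + 2 * r * δ) ^ 2)⁻¹ *
          Real.exp (-(r / (1 + 2 * r * δ) * sqBessel4 γ s ω)))) ∂P := by
        refine (fubini_aux (C := C) ?_ hK ?_).symm
        · simp only [Function.uncurry_def]
          have h1 : Measurable (fun p : ℝ × Ω => ξ p.2) := hξm.comp measurable_snd
          have h2 : Measurable (fun p : ℝ × Ω => sqBessel4 γ s p.2) :=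
            hU0.comp measurable_snd
          have h3 : Measurable (fun p : ℝ × Ω => ((1 + 2 * p.1 * δ) ^ 2)⁻¹) := by fun_prop
          have h4 : Measurable (fun p : ℝ × Ω => p.1 / (1 + 2 * p.1 * δ)) := by fun_prop
          exact h1.mul (h3.mul ((h4.mul h2).neg.exp))
        · intro r hr ω
          have hq : 0 ≤ r * δ := mul_nonneg hr hδ.le
          have hq2 : 1 ≤ 1 + 2 * r * δ := by linarith
          have h5 : ((1 + 2 * r * δ) ^ 2)⁻¹ ≤ 1 := inv_le_one_of_one_le₀ (one_le_pow₀ hq2)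
          have h6 : 0 ≤ ((1 + 2 * r * δ) ^ 2)⁻¹ := by positivity
          have h7 := hb s (r / (1 + 2 * r * δ)) ω (by positivity)
          have h8 := Real.exp_pos (-(r / (1 + 2 * r * δ) * sqBessel4 γ s ω))
          rw [abs_mul, abs_of_nonneg (mul_nonneg h6 h8.le)]
          have := hC ω
          have := abs_nonneg (ξ ω)
          have h9 := mul_le_one₀ h5 h8.le h7
          have h10 := mul_nonneg h6 h8.le
          nlinarith
    _ = _ := by
        congr 1; funext ω; rw [intervalIntegral.integral_const_mul, phi_subst hK hδ]

end B

/-- running maximum, in a form continuous in `t` -/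
noncomputable def rM (f : ℝ → ℝ) (t : ℝ) : ℝ := sSup ((fun u => f (u * t)) '' Icc (0:ℝ) 1)

lemma rM_cont {f : ℝ → ℝ} (hf : Continuous f) : Continuous (rM f) := by
  unfold rM
  exact isCompact_Icc.continuous_sSup (f := fun t u => f (u * t)) (by
    simp only [Function.HasUncurry.uncurry]
    fun_prop)

lemma rM_isCompact {f : ℝ → ℝ} (hf : Continuous f) (t : ℝ) :
    IsCompact ((fun u => f (u * t)) '' Icc (0:ℝ) 1) :=
  isCompact_Icc.image (by fun_prop)

lemma le_rM {f : ℝ → ℝ} (hf : Continuous f) {s t : ℝ} (hs : 0 ≤ s) (h : s ≤ t) :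
    f s ≤ rM f t := by
  apply le_csSup (rM_isCompact hf t).bddAbove
  rcases eq_or_lt_of_le (hs.trans h) with h0 | h0
  · refine ⟨0, by simp, ?_⟩
    have : s = 0 := by linarith
    simp [this]
  · refine ⟨s / t, ⟨by positivity, (div_le_one h0).2 h⟩, ?_⟩
    simp only
    rw [div_mul_cancel₀ _ h0.ne']

lemma rM_att {f : ℝ → ℝ} (hf : Continuous f) {t : ℝ} (ht : 0 ≤ t) :
    ∃ s, 0 ≤ s ∧ s ≤ t ∧ f s = rM f t := by
  have := (rM_isCompact hf t).sSup_mem ((nonempty_Icc.2 zero_le_one).image _)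
  obtain ⟨u, hu, h⟩ := this
  refine ⟨u * t, mul_nonneg hu.1 ht, ?_, h⟩
  have := mul_le_mul_of_nonneg_right hu.2 ht
  linarith

lemma rM_mono {f : ℝ → ℝ} (hf : Continuous f) {s t : ℝ} (hs : 0 ≤ s) (h : s ≤ t) :
    rM f s ≤ rM f t := by
  obtain ⟨r, h0, h1, h2⟩ := rM_att hf hs
  rw [← h2]
  exact le_rM hf h0 (h1.trans h)

lemma rM_zero {f : ℝ → ℝ} (hf : Continuous f) : rM f 0 = f 0 := by
  obtain ⟨r, h0, h1, h2⟩ := rM_att hf (le_refl (0:ℝ))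
  rw [← h2, le_antisymm h1 h0]

lemma runMax_eq {Ω : Type*} {X : ℝ → Ω → ℝ} {ω : Ω} (hf : Continuous fun t => X t ω) {t : ℝ}
    (ht : 0 ≤ t) : runMax X t ω = rM (fun t => X t ω) t := by
  have : Nonempty (Icc (0:ℝ) t) := ⟨⟨0, le_refl _, ht⟩⟩
  apply le_antisymm
  · exact ciSup_le fun s => le_rM hf s.2.1 s.2.2
  · obtain ⟨r, h0, h1, h2⟩ := rM_att hf ht
    rw [← h2]
    have hb : BddAbove (range fun s : Icc (0:ℝ) t => X s ω) := by
      refine ⟨rM (fun t => X t ω) t, ?_⟩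
      rintro _ ⟨s, rfl⟩
      exact le_rM hf s.2.1 s.2.2
    exact le_ciSup hb ⟨r, h0, h1⟩

lemma rM_meas {Ω : Type*} {F : MeasurableSpace Ω} {X : ℝ → Ω → ℝ}
    (hX : ∀ ω, Continuous fun t => X t ω) {t : ℝ} (ht : 0 ≤ t)
    (hm : ∀ s, 0 ≤ s → s ≤ t → Measurable (X s)) :
    Measurable (fun ω => rM (fun s => X s ω) t) := by
  apply measurable_of_Ioi
  intro x
  obtain ⟨D, hDc, hDd⟩ := TopologicalSpace.exists_countable_dense (Icc (0:ℝ) 1)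
  have : (fun ω => rM (fun s => X s ω) t) ⁻¹' Ioi x
      = ⋃ u ∈ D, {ω | x < X ((u : ℝ) * t) ω} := by
    ext ω
    simp only [mem_preimage, mem_Ioi, mem_iUnion, mem_ofPred_eq, exists_prop]
    constructor
    · intro h
      have hc := (rM_isCompact (hX ω) t).sSup_mem ((nonempty_Icc.2 zero_le_one).image _)
      obtain ⟨u, hu, h2⟩ := hc
      have ho : IsOpen {u : Icc (0:ℝ) 1 | x < X ((u:ℝ) * t) ω} := by
        apply isOpen_lt continuous_const
        exact (hX ω).comp (by fun_prop)
      obtain ⟨v, hv1, hv2⟩ := hDd.exists_mem_open ho ⟨⟨u, hu⟩, by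
        simp only [mem_ofPred_eq]
        simp only at h2
        rw [h2]; exact h⟩
      exact ⟨v, hv1, hv2⟩
    · rintro ⟨u, _, h⟩
      refine h.trans_le (le_rM (hX ω) (mul_nonneg u.2.1 ht) ?_)
      have := mul_le_mul_of_nonneg_right u.2.2 ht
      linarith
  rw [this]
  refine MeasurableSet.biUnion hDc fun u _ => ?_
  have hu : (u : ℝ) * t ≤ t := by
    have := mul_le_mul_of_nonneg_right u.2.2 ht
    linarith
  exact measurableSet_lt measurable_const (hm _ (mul_nonneg u.2.1 ht) hu)

/-- clipped running maximum -/
noncomputable def mm (b : ℝ) (f : ℝ → ℝ) (t : ℝ) : ℝ := max 1 (min (rM f t) b)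

/-- barrier function -/
noncomputable def VV (ε b : ℝ) (f : ℝ → ℝ) (t : ℝ) : ℝ :=
  min (b - rM f t) (max (1 - rM f t) (f t - max (mm b f t - 1) ε))

/-- stopping time -/
noncomputable def ta (ε b T : ℝ) (f : ℝ → ℝ) : ℝ := sInf {t | 0 ≤ t ∧ (T ≤ t ∨ VV ε b f t ≤ 0)}

lemma mm_cont {f : ℝ → ℝ} (hf : Continuous f) (b : ℝ) : Continuous (mm b f) := by
  have := rM_cont hf
  unfold mm
  fun_prop

lemma VV_cont {f : ℝ → ℝ} (hf : Continuous f) (ε b : ℝ) : Continuous (VV ε b f) := by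
  have := rM_cont hf
  have := mm_cont hf b
  unfold VV
  fun_prop

lemma one_le_mm (b : ℝ) (f : ℝ → ℝ) (t : ℝ) : 1 ≤ mm b f t := le_max_left _ _

lemma mm_le {b : ℝ} (hb : 1 ≤ b) (f : ℝ → ℝ) (t : ℝ) : mm b f t ≤ b :=
  max_le hb (min_le_right _ _)

lemma mm_mono {f : ℝ → ℝ} (hf : Continuous f) {s t : ℝ} (b : ℝ) (hs : 0 ≤ s) (h : s ≤ t) :
    mm b f s ≤ mm b f t := by
  have := rM_mono hf hs h
  unfold mm
  gcongr

lemma VV_pos {f : ℝ → ℝ} {ε b t : ℝ} (h : 0 < VV ε b f t) :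
    rM f t < b ∧ (mm b f t = 1 ∨ (ε < f t ∧ mm b f t - 1 < f t)) := by
  unfold VV at h
  rw [lt_min_iff, lt_max_iff] at h
  refine ⟨by linarith [h.1], ?_⟩
  rcases h.2 with h1 | h1
  · left
    unfold mm
    exact max_eq_left ((min_le_left _ _).trans (by linarith))
  · right
    have := le_max_left (mm b f t - 1) ε
    have := le_max_right (mm b f t - 1) ε
    constructor <;> linarith

lemma VV_nonneg {f : ℝ → ℝ} {ε b t : ℝ} (h : 0 ≤ VV ε b f t) :
    rM f t ≤ b ∧ (mm b f t = 1 ∨ (ε ≤ f t ∧ mm b f t - 1 ≤ f t)) := by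
  unfold VV at h
  rw [le_min_iff, le_max_iff] at h
  refine ⟨by linarith [h.1], ?_⟩
  rcases h.2 with h1 | h1
  · left
    unfold mm
    exact max_eq_left ((min_le_left _ _).trans (by linarith))
  · right
    have := le_max_left (mm b f t - 1) ε
    have := le_max_right (mm b f t - 1) ε
    constructor <;> linarith

section ta
variable {f : ℝ → ℝ} {ε b T : ℝ}

lemma ta_set (hf : Continuous f) : IsClosed {t | 0 ≤ t ∧ (T ≤ t ∨ VV ε b f t ≤ 0)} := by
  have := VV_cont hf ε b
  have e : {t | 0 ≤ t ∧ (T ≤ t ∨ VV ε b f t ≤ 0)}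
      = {t | 0 ≤ t} ∩ ({t | T ≤ t} ∪ {t | VV ε b f t ≤ 0}) := by
    ext t; simp
  rw [e]
  exact (isClosed_le continuous_const continuous_id).inter
    ((isClosed_le continuous_const continuous_id).union (isClosed_le this continuous_const))

lemma ta_bdd : BddBelow {t | 0 ≤ t ∧ (T ≤ t ∨ VV ε b f t ≤ 0)} := ⟨0, fun _ h => h.1⟩

lemma ta_mem (hf : Continuous f) (hT : 0 ≤ T) :
    0 ≤ ta ε b T f ∧ (T ≤ ta ε b T f ∨ VV ε b f (ta ε b T f) ≤ 0) :=
  (ta_set hf).csInf_mem ⟨T, hT, Or.inl le_rfl⟩ ta_bdd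

lemma ta_le (hT : 0 ≤ T) : ta ε b T f ≤ T := csInf_le ta_bdd ⟨hT, Or.inl le_rfl⟩

lemma ta_lt {t : ℝ} (ht : 0 ≤ t) (h : t < ta ε b T f) : t < T ∧ 0 < VV ε b f t := by
  have := notMem_of_lt_csInf h ta_bdd
  simp only [mem_ofPred_eq, not_and, not_or, not_le] at this
  exact this ht

lemma ta_lt_iff (hf : Continuous f) (hT : 0 ≤ T) {t : ℝ} (ht : 0 ≤ t) :
    t < ta ε b T f ↔ t < T ∧ ∀ s, 0 ≤ s → s ≤ t → 0 < VV ε b f s := by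
  constructor
  · intro h
    exact ⟨(ta_lt ht h).1, fun s hs hst => (ta_lt hs (hst.trans_lt h)).2⟩
  · rintro ⟨h1, h2⟩
    by_contra! h
    obtain ⟨h3, h4⟩ := ta_mem (ε := ε) (b := b) hf hT
    rcases h4 with h4 | h4
    · linarith
    · have := h2 _ h3 h
      linarith

lemma VV_zero (hf : Continuous f) (h0 : f 0 = 0) (hb : 0 < b) : 0 < VV ε b f 0 := by
  unfold VV
  rw [rM_zero hf, h0]
  simp [hb]

lemma VV_ta (hf : Continuous f) (h0 : f 0 = 0) (hb : 0 < b) (hT : 0 ≤ T) :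
    0 ≤ VV ε b f (ta ε b T f) := by
  have h1 := (ta_mem (ε := ε) (b := b) hf hT).1
  rcases eq_or_lt_of_le h1 with h2 | h2
  · rw [← h2]; exact (VV_zero hf h0 hb).le
  · by_contra! h
    have ho : IsOpen {t | VV ε b f t < 0} := isOpen_lt (VV_cont hf ε b) continuous_const
    obtain ⟨l, hl, hl2⟩ := exists_Ioc_subset_of_mem_nhds (ho.mem_nhds h) ⟨0, h2⟩
    have hlt : max l 0 < ta ε b T f := max_lt hl h2
    obtain ⟨x, hx1, hx2⟩ := exists_between hlt
    have hx3 := hl2 ⟨(le_max_left _ _).trans_lt hx1, hx2.le⟩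
    have := (ta_lt ((le_max_right _ _).trans hx1.le) hx2).2
    simp only [mem_ofPred_eq] at hx3
    linarith

end ta

section C
variable {Ω : Type*} [mΩ : MeasurableSpace Ω] {P : Measure Ω} [IsProbabilityMeasure P]
  {γ : ℝ → Ω → EuclideanSpace ℝ (Fin 4)}

lemma rM_past (hγ : IsStdBMVec 4 P γ) {s t : ℝ} (hs : 0 ≤ s) (hst : s ≤ t) :
    Measurable[pastF γ t] (fun ω => rM (fun s => sqBessel4 γ s ω) s) :=
  rM_meas (F := pastF γ t) (sq_cont hγ) hs fun _ h0 h => sq_pastF h0 (h.trans hst)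

lemma mm_past (hγ : IsStdBMVec 4 P γ) (b : ℝ) {s t : ℝ} (hs : 0 ≤ s) (hst : s ≤ t) :
    Measurable[pastF γ t] (fun ω => mm b (fun s => sqBessel4 γ s ω) s) := by
  unfold mm
  exact measurable_const.max ((rM_past hγ hs hst).min measurable_const)

lemma VV_past (hγ : IsStdBMVec 4 P γ) (ε b : ℝ) {s t : ℝ} (hs : 0 ≤ s) (hst : s ≤ t) :
    Measurable[pastF γ t] (fun ω => VV ε b (fun s => sqBessel4 γ s ω) s) := by
  unfold VV
  have h1 := rM_past hγ hs hst
  have h2 := mm_past hγ b hs hst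
  have h3 : Measurable[pastF γ t] (fun ω => sqBessel4 γ s ω) := sq_pastF hs hst
  exact (measurable_const.sub h1).min ((measurable_const.sub h1).max
    (h3.sub ((h2.sub measurable_const).max measurable_const)))

lemma ta_past (hγ : IsStdBMVec 4 P γ) (ε b : ℝ) {T t : ℝ} (hT : 0 ≤ T) (ht : 0 ≤ t) :
    MeasurableSet[pastF γ t] {ω | t < ta ε b T (fun s => sqBessel4 γ s ω)} := by
  have h1 : Measurable[pastF γ t]
      (fun ω => rM (fun s => - VV ε b (fun s => sqBessel4 γ s ω) s) t) :=
    rM_meas (F := pastF γ t) (fun ω => (VV_cont (sq_cont hγ ω) ε b).neg) ht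
      fun s h0 h => (VV_past hγ ε b h0 h).neg
  have : {ω | t < ta ε b T (fun s => sqBessel4 γ s ω)}
      = {ω | t < T} ∩ {ω | rM (fun s => - VV ε b (fun s => sqBessel4 γ s ω) s) t < 0} := by
    ext ω
    simp only [mem_ofPred_eq, mem_inter_iff]
    rw [ta_lt_iff (sq_cont hγ ω) hT ht]
    refine and_congr_right fun _ => ?_
    have hc := (VV_cont (sq_cont hγ ω) ε b).neg
    constructor
    · intro h
      obtain ⟨s, h0, h1, h2⟩ := rM_att hc ht
      have h3 := h s h0 h1
      have h2 : -VV ε b (fun s => sqBessel4 γ s ω) s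
        = rM (fun s => - VV ε b (fun s => sqBessel4 γ s ω) s) t := h2
      rw [← h2]
      linarith
    · intro h s h0 h1
      have : -VV ε b (fun s => sqBessel4 γ s ω) s ≤ _ := le_rM hc h0 h1
      have h : rM (-VV ε b (fun s => sqBessel4 γ s ω)) t < 0 := h
      linarith
  rw [this]
  exact (MeasurableSet.const _).inter (measurableSet_lt h1 measurable_const)

end C

/-- coefficient function -/
noncomputable def aK (K m : ℝ) : ℝ :=
  Real.exp m - (Real.exp (-((K - 1) * 1)) - Real.exp (-((K - 1) * m))) / (K - 1)

/-- coefficient function -/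
noncomputable def cc (m : ℝ) : ℝ := (m - 1) * Real.exp m

/-- approximate martingale function -/
noncomputable def gK (K m u : ℝ) : ℝ := aK K m - cc m * phi K u

lemma gK_one (K u : ℝ) : gK K 1 u = Real.exp 1 := by simp [gK, aK, cc]

lemma gK_deriv {K : ℝ} (hK : 2 ≤ K) (u m : ℝ) :
    HasDerivAt (fun m => gK K m u) (m * Real.exp m * (phi K m - phi K u)) m := by
  unfold gK aK cc
  have hK1 : K - 1 ≠ 0 := by linarith
  have h1 : HasDerivAt (fun m : ℝ => -((K - 1) * m)) (-(K - 1)) m := by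
    simpa using ((hasDerivAt_id m).const_mul (K - 1)).fun_neg
  have h2 := (Real.hasDerivAt_exp m).fun_sub
    ((h1.exp.const_sub (Real.exp (-((K - 1) * 1)))).div_const (K - 1))
  have h3 := (((hasDerivAt_id' m).sub_const 1).fun_mul (Real.hasDerivAt_exp m)).mul_const (phi K u)
  refine (h2.fun_sub h3).congr_deriv ?_
  have h4 := phi_mul K m
  have h5 : Real.exp (-((K - 1) * m)) = Real.exp m * Real.exp (-(K * m)) := by
    rw [← Real.exp_add]; congr 1; ring
  rw [h5]
  have h6 : m * Real.exp m * (phi K m - phi K u)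
    = Real.exp m * (1 - Real.exp (-(K * m))) - m * Real.exp m * phi K u := by
    rw [← h4]; ring
  rw [h6]
  field_simp
  ring

lemma gK_incr {K : ℝ} (hK : 2 ≤ K) {m m' b u B : ℝ} (h1 : 1 ≤ m) (h : m ≤ m') (hb : m' ≤ b)
    (hB : ∀ x, m ≤ x → x ≤ m' → |phi K x - phi K u| ≤ B) :
    |gK K m' u - gK K m u| ≤ (m' - m) * (b * Real.exp b * B) := by
  have := Convex.norm_image_sub_le_of_norm_hasDerivWithin_le (s := Icc m m')
    (f := fun m => gK K m u) (f' := fun m => m * Real.exp m * (phi K m - phi K u))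
    (C := b * Real.exp b * B) (x := m) (y := m')
    (fun x _ => (gK_deriv hK u x).hasDerivWithinAt) ?_ (convex_Icc _ _)
    (left_mem_Icc.2 h) (right_mem_Icc.2 h)
  · rw [Real.norm_eq_abs, Real.norm_eq_abs, abs_of_nonneg (by linarith : 0 ≤ m' - m)] at this
    linarith
  · intro x hx
    rw [Real.norm_eq_abs, abs_mul]
    have hx0 : 0 ≤ x := by linarith [hx.1]
    rw [abs_of_nonneg (mul_nonneg hx0 (Real.exp_pos x).le)]
    have := hB x hx.1 hx.2
    have hxb : x ≤ b := hx.2.trans hb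
    have hb0 : 0 ≤ b := hx0.trans hxb
    gcongr

lemma cc_nonneg {m : ℝ} (h : 1 ≤ m) : 0 ≤ cc m := mul_nonneg (by linarith) (Real.exp_pos _).le

lemma cc_le {m b : ℝ} (h : 1 ≤ m) (hb : m ≤ b) : cc m ≤ b * Real.exp b := by
  unfold cc
  have : m - 1 ≤ b := by linarith
  gcongr
  linarith

lemma aK_abs {K m b : ℝ} (hK : 2 ≤ K) (h : 1 ≤ m) (hb : m ≤ b) : |aK K m| ≤ Real.exp b + 1 := by
  have h1 : Real.exp (-((K - 1) * 1)) ≤ 1 := by rw [Real.exp_le_one_iff]; linarith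
  have h2 : Real.exp (-((K - 1) * m)) ≤ Real.exp (-((K - 1) * 1)) := by
    apply Real.exp_le_exp.2; nlinarith
  have h3 := Real.exp_pos (-((K - 1) * m))
  have h4 : 0 ≤ (Real.exp (-((K - 1) * 1)) - Real.exp (-((K - 1) * m))) / (K - 1) :=
    div_nonneg (by linarith) (by linarith)
  have h5 : (Real.exp (-((K - 1) * 1)) - Real.exp (-((K - 1) * m))) / (K - 1) ≤ 1 :=
    (div_le_one (by linarith)).2 (by linarith)
  have h6 := Real.exp_le_exp.2 hb
  have h7 := Real.exp_pos m
  unfold aK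
  rw [abs_le]
  constructor <;> linarith

lemma gK_abs {K m b u : ℝ} (hK : 2 ≤ K) (h : 1 ≤ m) (hb : m ≤ b) (hu : 0 ≤ u) :
    |gK K m u| ≤ Real.exp b + 1 + b * Real.exp b * K := by
  have h1 := aK_abs hK h hb
  have h2 := cc_le h hb
  have h3 := cc_nonneg h
  have h4 := phi_nonneg (by linarith : 0 ≤ K) u
  have h5 := phi_le (by linarith : 0 ≤ K) hu
  have h6 : cc m * phi K u ≤ b * Real.exp b * K := by gcongr; linarith
  have h7 := mul_nonneg h3 h4
  unfold gK
  rw [abs_le] at h1 ⊢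
  constructor <;> linarith

lemma gK_cont {K : ℝ} : Continuous (fun p : ℝ × ℝ => gK K p.1 p.2) := by
  unfold gK aK cc
  have := phi_cont K
  fun_prop

lemma tend_grid (T : ℝ) : Tendsto (fun N : ℕ => T / ((N : ℝ) + 1)) atTop (𝓝 0) := by
  have := (tendsto_one_div_add_atTop_nhds_zero_nat (𝕜 := ℝ)).const_mul T
  rw [mul_zero] at this
  exact this.congr fun N => by ring

/-- discretised sum -/
noncomputable def Wd (ε b T K : ℝ) (f : ℝ → ℝ) (N : ℕ) : ℝ :=
  Real.exp 1 - ∑ k ∈ Finset.range (N + 1),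
    (if k * (T / (N + 1)) < ta ε b T f then cc (mm b f (k * (T / (N + 1)))) else 0) *
      (phi K (f (k * (T / (N + 1)) + T / (N + 1))) - phi K (f (k * (T / (N + 1)))))

section D
variable {f : ℝ → ℝ} {ε b T K : ℝ}

/-- first grid point past the stopping time -/
noncomputable def kap (ε b T : ℝ) (f : ℝ → ℝ) (N : ℕ) : ℕ := ⌈ta ε b T f / (T / (N + 1))⌉₊

lemma lt_kap (hT : 0 < T) (N k : ℕ) :
    k < kap ε b T f N ↔ k * (T / (N + 1)) < ta ε b T f := by
  unfold kap
  rw [Nat.lt_ceil, lt_div_iff₀ (by positivity)]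

lemma kap_le (hT : 0 < T) (N : ℕ) : kap ε b T f N ≤ N + 1 := by
  unfold kap
  rw [Nat.ceil_le, div_le_iff₀ (by positivity)]
  have := ta_le (ε := ε) (b := b) (f := f) hT.le
  push_cast
  field_simp
  exact this

/-- remainder -/
noncomputable def Rd (b T K : ℝ) (f : ℝ → ℝ) (N k : ℕ) : ℝ :=
  gK K (mm b f (k * (T / (N + 1)) + T / (N + 1))) (f (k * (T / (N + 1)) + T / (N + 1)))
    - gK K (mm b f (k * (T / (N + 1)))) (f (k * (T / (N + 1)) + T / (N + 1)))

lemma mm_zero (hf : Continuous f) (h0 : f 0 = 0) (hb : 1 ≤ b) : mm b f 0 = 1 := by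
  unfold mm
  rw [rM_zero hf, h0]
  exact max_eq_left ((min_le_left _ _).trans zero_le_one)

lemma Wd_eq (hf : Continuous f) (h0 : f 0 = 0) (hb : 1 ≤ b) (hT : 0 < T) (N : ℕ) :
    gK K (mm b f (kap ε b T f N * (T / (N + 1)))) (f (kap ε b T f N * (T / (N + 1))))
      - ∑ k ∈ Finset.range (kap ε b T f N), Rd b T K f N k = Wd ε b T K f N := by
  set δ := T / ((N : ℝ) + 1) with hδ
  have h1 := Finset.sum_range_sub (fun k : ℕ => gK K (mm b f (k * δ)) (f (k * δ))) (kap ε b T f N)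
  have h2 : gK K (mm b f ((0 : ℕ) * δ)) (f ((0 : ℕ) * δ)) = Real.exp 1 := by
    simp [mm_zero hf h0 hb, gK_one]
  rw [h2] at h1
  have h3 : Wd ε b T K f N = Real.exp 1 - ∑ k ∈ Finset.range (kap ε b T f N),
      cc (mm b f (k * δ)) * (phi K (f (k * δ + δ)) - phi K (f (k * δ))) := by
    unfold Wd
    rw [← hδ]
    congr 1
    rw [← Finset.sum_subset (Finset.range_mono (kap_le (ε := ε) (b := b) (f := f) hT N))]
    · apply Finset.sum_congr rfl
      intro k hk
      rw [if_pos ((lt_kap hT N k).1 (Finset.mem_range.1 hk))]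
    · intro k _ hk
      rw [if_neg, zero_mul]
      intro h
      exact hk (Finset.mem_range.2 ((lt_kap hT N k).2 h))
  rw [h3, sub_eq_iff_eq_add, sub_add, ← Finset.sum_sub_distrib, eq_sub_iff_add_eq,
    ← eq_sub_iff_add_eq', ← neg_inj, neg_sub, ← h1, ← Finset.sum_neg_distrib]
  apply Finset.sum_congr rfl
  intro k _
  unfold Rd
  rw [← hδ]
  have : ((k + 1 : ℕ) : ℝ) * δ = k * δ + δ := by push_cast; ring
  rw [this]
  unfold gK
  ring

lemma Rd_bound (hf : Continuous f) (hfp : ∀ t, 0 ≤ f t) (hb : 1 ≤ b) (hT : 0 < T)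
    (hK : 2 ≤ K) (N k : ℕ) (hk : k < kap ε b T f N) {ρ : ℝ}
    (hρ : ∀ s, k * (T / (N + 1)) ≤ s → s ≤ k * (T / (N + 1)) + T / (N + 1) →
      |f s - f (k * (T / (N + 1)) + T / (N + 1))| ≤ ρ) :
    |Rd b T K f N k| ≤ (mm b f (k * (T / (N + 1)) + T / (N + 1)) - mm b f (k * (T / (N + 1))))
      * (b * Real.exp b * (K ^ 2 * ρ)) := by
  have hk' := (lt_kap (ε := ε) (b := b) (f := f) hT N k).1 hk
  unfold Rd
  set δ := T / ((N : ℝ) + 1) with hδ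
  have hδ0 : 0 < δ := by positivity
  have ht0 : 0 ≤ k * δ := by positivity
  have hV := (VV_pos (ta_lt ht0 hk').2).1
  have hmono := mm_mono hf b ht0 (by linarith : k * δ ≤ k * δ + δ)
  have hfk := le_rM hf ht0 le_rfl
  rcases eq_or_lt_of_le hmono with he | hlt
  · rw [he]; simp
  · apply gK_incr hK (one_le_mm _ _ _) hmono (mm_le hb _ _)
    intro x hx1 hx2
    have hx0 : 0 ≤ x := by linarith [one_le_mm b f (k * δ)]
    refine (phi_lip (by linarith) hx0 (hfp _)).trans ?_
    gcongr
    obtain ⟨s, hs0, hs1, hs2⟩ := rM_att hf (by linarith : 0 ≤ k * δ + δ)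
    have hm1 : rM f (k * δ) ≤ mm b f (k * δ) := by
      unfold mm
      rw [min_eq_left hV.le]; exact le_max_right _ _
    have hm2 : mm b f (k * δ + δ) ≤ rM f (k * δ + δ) := by
      unfold mm at hlt ⊢
      rcases lt_max_iff.1 hlt with h | h
      · exact absurd (le_max_left _ _) (not_le.2 h)
      · refine max_le ?_ (min_le_left _ _)
        have := (le_max_left 1 (min (rM f (k * δ)) b)).trans_lt h
        exact this.le.trans (min_le_left _ _)
    have hs3 : k * δ ≤ s := by
      by_contra! h
      have := le_rM hf hs0 h.le
      linarith
    have e1 := hρ s hs3 hs1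
    have e2 := hρ (k * δ) le_rfl (by linarith)
    rw [abs_le] at e1 e2 ⊢
    constructor <;> linarith

lemma Rd_bound0 (hf : Continuous f) (hfp : ∀ t, 0 ≤ f t) (hb : 1 ≤ b) (hT : 0 < T)
    (hK : 2 ≤ K) (N k : ℕ) :
    |Rd b T K f N k| ≤ (mm b f (k * (T / (N + 1)) + T / (N + 1)) - mm b f (k * (T / (N + 1))))
      * (b * Real.exp b * K) := by
  unfold Rd
  set δ := T / ((N : ℝ) + 1) with hδ
  have hδ0 : 0 < δ := by positivity
  have ht0 : 0 ≤ k * δ := by positivity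
  apply gK_incr hK (one_le_mm _ _ _) (mm_mono hf b ht0 (by linarith : k * δ ≤ k * δ + δ))
    (mm_le hb _ _)
  intro x hx1 hx2
  have hx0 : 0 ≤ x := by linarith [one_le_mm b f (k * δ)]
  have hK0 : 0 ≤ K := by linarith
  have := phi_nonneg hK0 x
  have := phi_le hK0 hx0
  have := phi_nonneg hK0 (f (k * δ + δ))
  have := phi_le hK0 (hfp (k * δ + δ))
  rw [abs_le]
  constructor <;> linarith

lemma sum_mm {B : ℝ} (hb : 1 ≤ b) (hB : 0 ≤ B) {h : ℕ → ℝ} {N n : ℕ}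
    (hh : ∀ k < n, |h k| ≤ (mm b f (k * (T / (N + 1)) + T / (N + 1))
      - mm b f (k * (T / (N + 1)))) * B) :
    |∑ k ∈ Finset.range n, h k| ≤ b * B := by
  calc |∑ k ∈ Finset.range n, h k| ≤ ∑ k ∈ Finset.range n, |h k| := Finset.abs_sum_le_sum_abs _ _
    _ ≤ ∑ k ∈ Finset.range n, (mm b f (((k + 1 : ℕ) : ℝ) * (T / (N + 1)))
      - mm b f (k * (T / (N + 1)))) * B := by
        apply Finset.sum_le_sum
        intro k hk
        have e : ((k + 1 : ℕ) : ℝ) * (T / (N + 1)) = k * (T / (N + 1)) + T / (N + 1) := by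
          push_cast; ring
        rw [e]
        exact hh k (Finset.mem_range.1 hk)
    _ = (mm b f (n * (T / (N + 1))) - mm b f ((0:ℕ) * (T / (N + 1)))) * B := by
        rw [← Finset.sum_mul, Finset.sum_range_sub (fun k : ℕ => mm b f (k * (T / (N + 1))))]
    _ ≤ b * B := by
        have h1 := mm_le hb f (n * (T / (N + 1)))
        have h2 := one_le_mm b f ((0:ℕ) * (T / (N + 1)))
        gcongr
        linarith

lemma Wd_abs (hf : Continuous f) (h0 : f 0 = 0) (hfp : ∀ t, 0 ≤ f t) (hb : 1 ≤ b) (hT : 0 < T)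
    (hK : 2 ≤ K) (N : ℕ) :
    |Wd ε b T K f N| ≤ Real.exp b + 1 + b * Real.exp b * K + b * (b * Real.exp b * K) := by
  rw [← Wd_eq hf h0 hb hT]
  refine (abs_sub _ _).trans ?_
  gcongr
  · exact gK_abs hK (one_le_mm _ _ _) (mm_le hb _ _) (hfp _)
  · exact sum_mm hb (by positivity) fun k _ => Rd_bound0 hf hfp hb hT hK N k

lemma kap_tendsto (hf : Continuous f) (hT : 0 < T) :
    Tendsto (fun N : ℕ => (kap ε b T f N : ℝ) * (T / (N + 1))) atTop (𝓝 (ta ε b T f)) := by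
  have h1 : Tendsto (fun N : ℕ => T / ((N : ℝ) + 1)) atTop (𝓝 0) :=
    tend_grid T
  have h2 : Tendsto (fun N : ℕ => ta ε b T f + T / ((N : ℝ) + 1)) atTop (𝓝 (ta ε b T f)) := by
    simpa using tendsto_const_nhds.add h1
  refine tendsto_of_tendsto_of_tendsto_of_le_of_le tendsto_const_nhds h2 ?_ ?_
  · intro N
    have hδ : 0 < T / ((N : ℝ) + 1) := by positivity
    have := Nat.le_ceil (ta ε b T f / (T / ((N : ℝ) + 1)))
    rw [div_le_iff₀ hδ] at this
    exact this
  · intro N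
    have hδ : 0 < T / ((N : ℝ) + 1) := by positivity
    have := Nat.ceil_lt_add_one (div_nonneg (ta_mem (ε := ε) (b := b) hf hT.le).1 hδ.le)
    have h3 : (kap ε b T f N : ℝ) ≤ ta ε b T f / (T / ((N : ℝ) + 1)) + 1 := this.le
    have h4 := mul_le_mul_of_nonneg_right h3 hδ.le
    rw [add_mul, div_mul_cancel₀ _ hδ.ne', one_mul] at h4
    exact h4

lemma Wd_tendsto (hf : Continuous f) (h0 : f 0 = 0) (hfp : ∀ t, 0 ≤ f t) (hb : 1 ≤ b)
    (hT : 0 < T) (hK : 2 ≤ K) :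
    Tendsto (fun N => Wd ε b T K f N) atTop
      (𝓝 (gK K (mm b f (ta ε b T f)) (f (ta ε b T f)))) := by
  have hk := kap_tendsto (ε := ε) (b := b) hf hT
  have h1 : Tendsto (fun N : ℕ => gK K (mm b f (kap ε b T f N * (T / (N + 1))))
      (f (kap ε b T f N * (T / (N + 1))))) atTop
      (𝓝 (gK K (mm b f (ta ε b T f)) (f (ta ε b T f)))) := by
    have hc : Continuous (fun t => gK K (mm b f t) (f t)) :=
      gK_cont.comp ((mm_cont hf b).prodMk hf)
    exact (hc.tendsto _).comp hk
  have h2 : Tendsto (fun N : ℕ => ∑ k ∈ Finset.range (kap ε b T f N), Rd b T K f N k) atTop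
      (𝓝 0) := by
    rw [Metric.tendsto_atTop]
    intro e he
    have huc := isCompact_Icc.uniformContinuousOn_of_continuous
      (hf.continuousOn (s := Icc (0:ℝ) T))
    rw [Metric.uniformContinuousOn_iff] at huc
    set Q := b * (b * Real.exp b * K ^ 2) with hQ
    have hQ0 : 0 < Q := by positivity
    obtain ⟨d, hd, hd2⟩ := huc (e / (2 * Q)) (by positivity)
    have ht : Tendsto (fun N : ℕ => T / ((N : ℝ) + 1)) atTop (𝓝 0) :=
      tend_grid T
    obtain ⟨N0, hN0⟩ := eventually_atTop.1 (ht.eventually (gt_mem_nhds hd))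
    refine ⟨N0, fun N hN => ?_⟩
    have hδ := hN0 N hN
    rw [Real.dist_eq, sub_zero]
    have hb' := sum_mm (b := b) (f := f) (T := T) (N := N) (n := kap ε b T f N)
      (B := b * Real.exp b * (K ^ 2 * (e / (2 * Q)))) (h := Rd b T K f N) hb (by positivity) ?_
    · have : b * (b * Real.exp b * (K ^ 2 * (e / (2 * Q)))) = e / 2 := by
        have : b * (b * Real.exp b * (K ^ 2 * (e / (2 * Q)))) = Q * (e / (2 * Q)) := by
          rw [hQ]; ring
        rw [this]; field_simp
      linarith
    · intro k hk
      apply Rd_bound hf hfp hb hT hK N k hk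
      intro s hs1 hs2
      have hk2 : ((k + 1 : ℕ) : ℝ) ≤ ((N + 1 : ℕ) : ℝ) := by
        exact_mod_cast (Nat.succ_le_of_lt hk).trans (kap_le hT N)
      have hδ0 : 0 < T / ((N : ℝ) + 1) := by positivity
      have hle : k * (T / ((N : ℝ) + 1)) + T / ((N : ℝ) + 1) ≤ T := by
        have := mul_le_mul_of_nonneg_right hk2 hδ0.le
        push_cast at this
        have e2 : ((N : ℝ) + 1) * (T / ((N : ℝ) + 1)) = T := by field_simp
        linarith
      have hk0 : 0 ≤ k * (T / ((N : ℝ) + 1)) := by positivity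
      have := hd2 s ⟨by linarith, by linarith⟩ (k * (T / (N + 1)) + T / (N + 1))
        ⟨by linarith, hle⟩ (by
          rw [Real.dist_eq, abs_lt]
          constructor <;> linarith)
      rw [Real.dist_eq] at this
      exact this.le
  have := h1.sub h2
  simp only [sub_zero] at this
  exact this.congr fun N => Wd_eq hf h0 hb hT N

end D

section E
variable {Ω : Type*} [mΩ : MeasurableSpace Ω] {P : Measure Ω} [IsProbabilityMeasure P]
  {γ : ℝ → Ω → EuclideanSpace ℝ (Fin 4)}

/-- error bound -/
noncomputable def eta (ε b T K : ℝ) : ℝ :=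
  T * (b * Real.exp b * (2 * K ^ 2 * Real.exp (-(K / 2 * ε))))

/-- stopped coefficient -/
noncomputable def xi (γ : ℝ → Ω → EuclideanSpace ℝ (Fin 4)) (ε b T t : ℝ) (ω : Ω) : ℝ :=
  if t < ta ε b T (fun s => sqBessel4 γ s ω) then cc (mm b (fun s => sqBessel4 γ s ω) t) else 0

lemma cc_cont : Continuous cc := by unfold cc; fun_prop

lemma xi_past (hγ : IsStdBMVec 4 P γ) (ε b : ℝ) {T t : ℝ} (hT : 0 ≤ T) (ht : 0 ≤ t) :
    Measurable[pastF γ t] (xi γ ε b T t) := by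
  unfold xi
  exact Measurable.ite (ta_past hγ ε b hT ht)
    (cc_cont.measurable.comp (mm_past hγ b ht le_rfl)) measurable_const

lemma xi_nonneg (ε b T t : ℝ) (ω : Ω) : 0 ≤ xi γ ε b T t ω := by
  unfold xi
  split_ifs
  · exact cc_nonneg (one_le_mm _ _ _)
  · exact le_rfl

lemma xi_le {b : ℝ} (hb : 1 ≤ b) (ε T t : ℝ) (ω : Ω) : xi γ ε b T t ω ≤ b * Real.exp b := by
  unfold xi
  split_ifs
  · exact cc_le (one_le_mm _ _ _) (mm_le hb _ _)
  · positivity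

lemma xi_abs {b : ℝ} (hb : 1 ≤ b) (ε T t : ℝ) (ω : Ω) : |xi γ ε b T t ω| ≤ b * Real.exp b := by
  rw [abs_of_nonneg (xi_nonneg _ _ _ _ _)]; exact xi_le hb _ _ _ _

lemma xi_zero {ε b T t : ℝ} (ht : 0 ≤ t) (ω : Ω) (h : sqBessel4 γ t ω < ε) :
    xi γ ε b T t ω = 0 := by
  unfold xi
  split_ifs with h1
  · rcases (VV_pos (ta_lt ht h1).2).2 with h2 | h2
    · rw [h2]; simp [cc]
    · linarith [h2.1]
  · rfl

lemma xi_phi_int (hγ : IsStdBMVec 4 P γ) (ε : ℝ) {b T t : ℝ} (hb : 1 ≤ b) (hT : 0 ≤ T) (ht : 0 ≤ t)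
    {K : ℝ} (hK : 0 ≤ K) (s : ℝ) :
    Integrable (fun ω => xi γ ε b T t ω * phi K (sqBessel4 γ s ω)) P := by
  refine Integrable.of_bound (C := b * Real.exp b * K) ?_ (Eventually.of_forall fun ω => ?_)
  · exact (((xi_past hγ ε b hT ht).mono (pastF_le hγ t) le_rfl).mul
      ((phi_cont K).measurable.comp (sq_meas hγ s))).aestronglyMeasurable
  · rw [Real.norm_eq_abs, abs_mul]
    have := xi_abs (γ := γ) hb ε T t ω
    have := phi_abs hK (sq_nonneg' (γ := γ) s ω)
    gcongr

lemma step_bound (hγ : IsStdBMVec 4 P γ) {ε b T t δ K : ℝ} (hε : 0 ≤ ε) (hb : 1 ≤ b) (hT : 0 ≤ T)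
    (ht : 0 ≤ t) (hδ : 0 < δ) (hK : 0 ≤ K) (hKδ : 2 * K * δ ≤ 1) :
    -(δ * (b * Real.exp b * (2 * K ^ 2 * Real.exp (-(K / 2 * ε))))) ≤
      ∫ ω, xi γ ε b T t ω * (phi K (sqBessel4 γ (t + δ) ω) - phi K (sqBessel4 γ t ω)) ∂P ∧
    ∫ ω, xi γ ε b T t ω * (phi K (sqBessel4 γ (t + δ) ω) - phi K (sqBessel4 γ t ω)) ∂P ≤ 0 := by
  have hpos : 0 < 1 + 2 * K * δ := by positivity
  set K' := K / (1 + 2 * K * δ) with hK'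
  have hK'0 : 0 ≤ K' := by positivity
  have hK'K : K' ≤ K := by
    apply div_le_self hK
    have : 0 ≤ K * δ := by positivity
    linarith
  have hK'2 : K / 2 ≤ K' := by
    rw [hK']
    apply div_le_div_of_nonneg_left hK hpos
    linarith
  have hKK : K - K' ≤ 2 * K ^ 2 * δ := by
    have : K - K' = 2 * K ^ 2 * δ / (1 + 2 * K * δ) := by
      rw [hK']; field_simp; ring
    rw [this]
    apply div_le_self (by positivity)
    have : 0 ≤ K * δ := by positivity
    linarith
  have e : ∫ ω, xi γ ε b T t ω * (phi K (sqBessel4 γ (t + δ) ω) - phi K (sqBessel4 γ t ω)) ∂P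
      = ∫ ω, -(xi γ ε b T t ω * (phi K (sqBessel4 γ t ω) - phi K' (sqBessel4 γ t ω))) ∂P := by
    simp_rw [mul_sub]
    rw [integral_sub (xi_phi_int hγ ε hb hT ht hK _) (xi_phi_int hγ ε hb hT ht hK _),
      phi_step hγ ht hδ (xi_past hγ ε b hT ht) (xi_abs hb ε T t) hK, ← hK', integral_neg,
      integral_sub (xi_phi_int hγ ε hb hT ht hK _) (xi_phi_int hγ ε hb hT ht hK'0 _)]
    ring
  have hint : Integrable (fun ω => -(xi γ ε b T t ω *
      (phi K (sqBessel4 γ t ω) - phi K' (sqBessel4 γ t ω)))) P := by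
    simp_rw [mul_sub]
    exact ((xi_phi_int hγ ε hb hT ht hK _).sub (xi_phi_int hγ ε hb hT ht hK'0 _)).neg
  rw [e]
  constructor
  · have : -(δ * (b * Real.exp b * (2 * K ^ 2 * Real.exp (-(K / 2 * ε)))))
        = ∫ ω : Ω, -(δ * (b * Real.exp b * (2 * K ^ 2 * Real.exp (-(K / 2 * ε))))) ∂P := by simp
    rw [this]
    apply integral_mono (integrable_const _) hint
    intro ω
    simp only
    apply neg_le_neg
    rcases lt_or_ge (sqBessel4 γ t ω) ε with h | h
    · rw [xi_zero ht ω h]; simp only [zero_mul]; positivity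
    · have h1 := phi_sub_le hK'0 hK'K hε h
      have h2 : Real.exp (-(K' * ε)) ≤ Real.exp (-(K / 2 * ε)) := by
        apply Real.exp_le_exp.2
        have := mul_le_mul_of_nonneg_right hK'2 hε
        linarith
      have h3 : phi K (sqBessel4 γ t ω) - phi K' (sqBessel4 γ t ω)
          ≤ 2 * K ^ 2 * δ * Real.exp (-(K / 2 * ε)) := by
        refine h1.trans ?_
        gcongr
      have h4 := xi_le (γ := γ) hb ε T t ω
      have h5 := xi_nonneg (γ := γ) ε b T t ω
      have h6 := phi_sub_nonneg hK'K (sqBessel4 γ t ω)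
      calc _ ≤ b * Real.exp b * (2 * K ^ 2 * δ * Real.exp (-(K / 2 * ε))) := by
            gcongr
        _ = _ := by ring
  · apply integral_nonpos
    intro ω
    have h5 := xi_nonneg (γ := γ) ε b T t ω
    have h6 := phi_sub_nonneg hK'K (sqBessel4 γ t ω)
    have := mul_nonneg h5 (sub_nonneg.2 h6)
    simp only [Pi.zero_apply]
    linarith

lemma Wd_xi (ε b T K : ℝ) (N : ℕ) (ω : Ω) :
    Wd ε b T K (fun s => sqBessel4 γ s ω) N = Real.exp 1 - ∑ k ∈ Finset.range (N + 1),
      xi γ ε b T (k * (T / (N + 1))) ω * (phi K (sqBessel4 γ (k * (T / (N + 1)) + T / (N + 1)) ω)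
        - phi K (sqBessel4 γ (k * (T / (N + 1))) ω)) := rfl

lemma Wd_meas (hγ : IsStdBMVec 4 P γ) (ε b : ℝ) {T : ℝ} (K : ℝ) (hT : 0 ≤ T) (N : ℕ) :
    Measurable (fun ω => Wd ε b T K (fun s => sqBessel4 γ s ω) N) := by
  simp_rw [Wd_xi]
  apply Measurable.const_sub
  apply Finset.measurable_fun_sum
  intro k _
  have ht : 0 ≤ (k : ℝ) * (T / (N + 1)) := by positivity
  exact ((xi_past hγ ε b hT ht).mono (pastF_le hγ _) le_rfl).mul
    (((phi_cont K).measurable.comp (sq_meas hγ _)).sub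
      ((phi_cont K).measurable.comp (sq_meas hγ _)))

lemma Wd_int (hγ : IsStdBMVec 4 P γ) {ε b T K : ℝ} (hε : 0 ≤ ε) (hb : 1 ≤ b) (hT : 0 < T)
    (hK : 0 ≤ K) (N : ℕ) (hN : 2 * K * (T / (N + 1)) ≤ 1) :
    Real.exp 1 ≤ ∫ ω, Wd ε b T K (fun s => sqBessel4 γ s ω) N ∂P ∧
    ∫ ω, Wd ε b T K (fun s => sqBessel4 γ s ω) N ∂P ≤ Real.exp 1 + eta ε b T K := by
  simp_rw [Wd_xi]
  have hi : ∀ k ∈ Finset.range (N + 1), Integrable (fun ω => xi γ ε b T (k * (T / (N + 1))) ω *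
      (phi K (sqBessel4 γ (k * (T / (N + 1)) + T / (N + 1)) ω)
        - phi K (sqBessel4 γ (k * (T / (N + 1))) ω))) P := by
    intro k _
    have ht : 0 ≤ (k : ℝ) * (T / (N + 1)) := by positivity
    simp_rw [mul_sub]
    exact (xi_phi_int hγ ε hb hT.le ht hK _).sub (xi_phi_int hγ ε hb hT.le ht hK _)
  rw [integral_sub (integrable_const _) (integrable_finsetSum _ hi), integral_finsetSum _ hi]
  have hs := fun k : ℕ => step_bound (P := P) hγ (ε := ε) hε hb hT.le
    (by positivity : 0 ≤ (k : ℝ) * (T / (N + 1))) (by positivity : 0 < T / ((N : ℝ) + 1)) hK hN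
  have h1 := Finset.sum_nonpos fun k (_ : k ∈ Finset.range (N + 1)) => (hs k).2
  have h2 := Finset.sum_le_sum fun k (_ : k ∈ Finset.range (N + 1)) => (hs k).1
  simp only [Finset.sum_const, Finset.card_range, nsmul_eq_mul] at h2
  have h3 : ((N + 1 : ℕ) : ℝ) * -(T / (N + 1) *
      (b * Real.exp b * (2 * K ^ 2 * Real.exp (-(K / 2 * ε))))) = -eta ε b T K := by
    unfold eta
    push_cast
    field_simp
  rw [h3] at h2
  simp only [integral_const, probReal_univ, one_smul]
  constructor <;> linarith

/-- value at the stopping time, as a function of `ω` -/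
noncomputable def Gt (γ : ℝ → Ω → EuclideanSpace ℝ (Fin 4)) (ε b T K : ℝ) (ω : Ω) : ℝ :=
  gK K (mm b (fun s => sqBessel4 γ s ω) (ta ε b T (fun s => sqBessel4 γ s ω)))
    (sqBessel4 γ (ta ε b T (fun s => sqBessel4 γ s ω)) ω)

lemma Gt_lim (hγ : IsStdBMVec 4 P γ) (ε : ℝ) {b T K : ℝ} (hb : 1 ≤ b) (hT : 0 < T)
    (hK : 2 ≤ K) (ω : Ω) :
    Tendsto (fun N => Wd ε b T K (fun s => sqBessel4 γ s ω) N) atTop (𝓝 (Gt γ ε b T K ω)) :=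
  Wd_tendsto (sq_cont hγ ω) (sq_zero hγ ω) (fun t => sq_nonneg' t ω) hb hT hK

lemma Gt_meas (hγ : IsStdBMVec 4 P γ) (ε : ℝ) {b T K : ℝ} (hb : 1 ≤ b) (hT : 0 < T)
    (hK : 2 ≤ K) : Measurable (Gt γ ε b T K) :=
  measurable_of_tendsto_metrizable (fun N => Wd_meas hγ ε b K hT.le N)
    (tendsto_pi_nhds.2 (Gt_lim hγ ε hb hT hK))

lemma Gt_int (hγ : IsStdBMVec 4 P γ) {ε b T K : ℝ} (hε : 0 ≤ ε) (hb : 1 ≤ b) (hT : 0 < T)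
    (hK : 2 ≤ K) :
    Real.exp 1 ≤ ∫ ω, Gt γ ε b T K ω ∂P ∧ ∫ ω, Gt γ ε b T K ω ∂P ≤ Real.exp 1 + eta ε b T K := by
  have hl : Tendsto (fun N => ∫ ω, Wd ε b T K (fun s => sqBessel4 γ s ω) N ∂P) atTop
      (𝓝 (∫ ω, Gt γ ε b T K ω ∂P)) := by
    refine tendsto_integral_of_dominated_convergence
      (fun _ => Real.exp b + 1 + b * Real.exp b * K + b * (b * Real.exp b * K))
      (fun N => (Wd_meas hγ ε b K hT.le N).aestronglyMeasurable) (integrable_const _)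
      (fun N => Eventually.of_forall fun ω => ?_) (Eventually.of_forall (Gt_lim hγ ε hb hT hK))
    exact Wd_abs (sq_cont hγ ω) (sq_zero hγ ω) (fun t => sq_nonneg' t ω) hb hT hK N
  have hev : ∀ᶠ N : ℕ in atTop, 2 * K * (T / ((N : ℝ) + 1)) ≤ 1 := by
    have h1 := (tend_grid T).const_mul (2 * K)
    rw [mul_zero] at h1
    exact h1.eventually (ge_mem_nhds zero_lt_one)
  constructor
  · exact ge_of_tendsto hl (hev.mono fun N hN => (Wd_int hγ hε hb hT (by linarith) N hN).1)
  · exact le_of_tendsto hl (hev.mono fun N hN => (Wd_int hγ hε hb hT (by linarith) N hN).2)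

/-- limit functional -/
noncomputable def Lf (m u : ℝ) : ℝ := Real.exp m * (1 - (m - 1) / u)

/-- limit functional at the stopping time -/
noncomputable def Lt (γ : ℝ → Ω → EuclideanSpace ℝ (Fin 4)) (ε b T : ℝ) (ω : Ω) : ℝ :=
  Lf (mm b (fun s => sqBessel4 γ s ω) (ta ε b T (fun s => sqBessel4 γ s ω)))
    (sqBessel4 γ (ta ε b T (fun s => sqBessel4 γ s ω)) ω)

lemma aK_lim {m : ℝ} (hm : 1 ≤ m) :
    Tendsto (fun n : ℕ => aK ((n : ℝ) + 2) m) atTop (𝓝 (Real.exp m)) := by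
  have h1 : ∀ n : ℕ, Real.exp m - 1 / ((n : ℝ) + 1) ≤ aK ((n : ℝ) + 2) m ∧
      aK ((n : ℝ) + 2) m ≤ Real.exp m := by
    intro n
    have hn : (n : ℝ) + 2 - 1 = n + 1 := by ring
    have hn0 : (0 : ℝ) < n + 1 := by positivity
    unfold aK
    rw [hn]
    have h1 : Real.exp (-(((n : ℝ) + 1) * 1)) ≤ 1 := by rw [Real.exp_le_one_iff]; linarith
    have h2 : Real.exp (-(((n : ℝ) + 1) * m)) ≤ Real.exp (-(((n : ℝ) + 1) * 1)) := by
      apply Real.exp_le_exp.2; nlinarith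
    have h3 := Real.exp_pos (-(((n : ℝ) + 1) * m))
    constructor
    · gcongr; linarith
    · have := div_nonneg (sub_nonneg.2 h2) hn0.le
      linarith
  have h2 : Tendsto (fun n : ℕ => Real.exp m - 1 / ((n : ℝ) + 1)) atTop (𝓝 (Real.exp m)) := by
    simpa using tendsto_const_nhds.sub (tend_grid 1)
  exact tendsto_of_tendsto_of_tendsto_of_le_of_le h2 tendsto_const_nhds (fun n => (h1 n).1)
    (fun n => (h1 n).2)

lemma phi_eq {K u : ℝ} (hu : 0 < u) : phi K u = (1 - Real.exp (-(K * u))) / u := by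
  rw [← phi_mul]; field_simp

lemma phi_lim {u : ℝ} (hu : 0 < u) :
    Tendsto (fun n : ℕ => phi ((n : ℝ) + 2) u) atTop (𝓝 (1 / u)) := by
  simp_rw [phi_eq hu]
  apply Tendsto.div_const
  have h1 : Tendsto (fun n : ℕ => -(((n : ℝ) + 2) * u)) atTop atBot := by
    apply tendsto_neg_atTop_atBot.comp
    exact (tendsto_atTop_add_const_right _ _ tendsto_natCast_atTop_atTop).atTop_mul_const hu
  have := tendsto_const_nhds (x := (1:ℝ)).sub (Real.tendsto_exp_atBot.comp h1)
  rw [sub_zero] at this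
  exact this

lemma eta_lim {ε : ℝ} (b T : ℝ) (hε : 0 < ε) :
    Tendsto (fun n : ℕ => eta ε b T ((n : ℝ) + 2)) atTop (𝓝 0) := by
  have h0 : Tendsto (fun n : ℕ => ((n : ℝ) + 2) * (ε / 2)) atTop atTop :=
    (tendsto_atTop_add_const_right _ _ tendsto_natCast_atTop_atTop).atTop_mul_const (by positivity)
  have h1 := ((Real.tendsto_pow_mul_exp_neg_atTop_nhds_zero 2).comp h0).const_mul
    (T * (b * Real.exp b * (2 * (2 / ε) ^ 2)))
  rw [mul_zero] at h1
  refine h1.congr fun n => ?_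
  simp only [Function.comp, eta]
  have e : -(((n : ℝ) + 2) / 2 * ε) = -(((n : ℝ) + 2) * (ε / 2)) := by ring
  rw [e]
  field_simp

lemma tau_info (hγ : IsStdBMVec 4 P γ) (ε : ℝ) {b T : ℝ} (hb : 1 < b) (hT : 0 ≤ T) (ω : Ω) :
    mm b (fun s => sqBessel4 γ s ω) (ta ε b T (fun s => sqBessel4 γ s ω)) = 1 ∨
    (ε ≤ sqBessel4 γ (ta ε b T (fun s => sqBessel4 γ s ω)) ω ∧
      mm b (fun s => sqBessel4 γ s ω) (ta ε b T (fun s => sqBessel4 γ s ω)) - 1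
        ≤ sqBessel4 γ (ta ε b T (fun s => sqBessel4 γ s ω)) ω) :=
  (VV_nonneg (VV_ta (ε := ε) (sq_cont hγ ω) (sq_zero hγ ω) (by linarith : 0 < b) hT)).2

lemma Lt_lim (hγ : IsStdBMVec 4 P γ) {ε b T : ℝ} (hε : 0 < ε) (hb : 1 < b) (hT : 0 < T) (ω : Ω) :
    Tendsto (fun n : ℕ => Gt γ ε b T ((n : ℝ) + 2) ω) atTop (𝓝 (Lt γ ε b T ω)) := by
  unfold Gt Lt
  have h1 := tau_info (P := P) hγ ε hb hT.le ω
  have hm1 := one_le_mm b (fun s => sqBessel4 γ s ω) (ta ε b T (fun s => sqBessel4 γ s ω))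
  generalize mm b (fun s => sqBessel4 γ s ω) (ta ε b T (fun s => sqBessel4 γ s ω)) = m at *
  generalize sqBessel4 γ (ta ε b T (fun s => sqBessel4 γ s ω)) ω = u at *
  rcases h1 with rfl | ⟨h1, _⟩
  · simp_rw [gK_one]
    simp [Lf]
  · have hu : 0 < u := by linarith
    have := (aK_lim hm1).sub ((phi_lim hu).const_mul (cc m))
    unfold gK
    convert this using 2
    unfold Lf cc
    field_simp

lemma Lt_meas (hγ : IsStdBMVec 4 P γ) {ε b T : ℝ} (hε : 0 < ε) (hb : 1 < b) (hT : 0 < T) :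
    Measurable (Lt γ ε b T) :=
  measurable_of_tendsto_metrizable
    (fun n : ℕ => Gt_meas hγ ε hb.le hT (by linarith [n.cast_nonneg (α := ℝ)] : (2:ℝ) ≤ n + 2))
    (tendsto_pi_nhds.2 (Lt_lim hγ hε hb hT))

lemma Gt_abs (hγ : IsStdBMVec 4 P γ) {ε b T K : ℝ} (hε : 0 < ε) (hb : 1 < b) (hT : 0 < T)
    (hK : 2 ≤ K) (ω : Ω) :
    |Gt γ ε b T K ω| ≤ Real.exp b + 1 + b * Real.exp b * (1 / ε) := by
  unfold Gt
  have h1 := tau_info (P := P) hγ ε hb hT.le ω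
  have hm1 := one_le_mm b (fun s => sqBessel4 γ s ω) (ta ε b T (fun s => sqBessel4 γ s ω))
  have hm2 := mm_le hb.le (fun s => sqBessel4 γ s ω) (ta ε b T (fun s => sqBessel4 γ s ω))
  generalize mm b (fun s => sqBessel4 γ s ω) (ta ε b T (fun s => sqBessel4 γ s ω)) = m at *
  generalize sqBessel4 γ (ta ε b T (fun s => sqBessel4 γ s ω)) ω = u at *
  have ha := aK_abs hK hm1 hm2
  have h3 := cc_nonneg hm1
  have h4 := phi_nonneg (by linarith : 0 ≤ K) u
  have h6 : cc m * phi K u ≤ b * Real.exp b * (1 / ε) := by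
    rcases h1 with rfl | ⟨h1, _⟩
    · simp only [cc, sub_self, zero_mul]; positivity
    · have hu : 0 < u := by linarith
      have h5 : phi K u ≤ 1 / ε := by
        rw [phi_eq hu]
        have := Real.exp_pos (-(K * u))
        gcongr
        linarith
      have h2 := cc_le hm1 hm2
      gcongr
  have h7 := mul_nonneg h3 h4
  unfold gK
  rw [abs_le] at ha ⊢
  constructor <;> linarith

theorem Lt_int (hγ : IsStdBMVec 4 P γ) {ε b T : ℝ} (hε : 0 < ε) (hb : 1 < b) (hT : 0 < T) :
    ∫ ω, Lt γ ε b T ω ∂P = Real.exp 1 := by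
  have hK : ∀ n : ℕ, (2:ℝ) ≤ n + 2 := fun n => by linarith [n.cast_nonneg (α := ℝ)]
  have hl : Tendsto (fun n : ℕ => ∫ ω, Gt γ ε b T ((n : ℝ) + 2) ω ∂P) atTop
      (𝓝 (∫ ω, Lt γ ε b T ω ∂P)) := by
    refine tendsto_integral_of_dominated_convergence
      (fun _ => Real.exp b + 1 + b * Real.exp b * (1 / ε))
      (fun n => (Gt_meas hγ ε hb.le hT (hK n)).aestronglyMeasurable) (integrable_const _)
      (fun n => Eventually.of_forall fun ω => Gt_abs hγ hε hb hT (hK n) ω)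
      (Eventually.of_forall (Lt_lim hγ hε hb hT))
  refine tendsto_nhds_unique hl ?_
  have h2 : Tendsto (fun n : ℕ => Real.exp 1 + eta ε b T ((n : ℝ) + 2)) atTop
      (𝓝 (Real.exp 1)) := by
    simpa using tendsto_const_nhds.add (eta_lim b T hε)
  exact tendsto_of_tendsto_of_tendsto_of_le_of_le tendsto_const_nhds h2
    (fun n => (Gt_int hγ hε.le hb.le hT (hK n)).1) (fun n => (Gt_int hγ hε.le hb.le hT (hK n)).2)

lemma Lt_abs (hγ : IsStdBMVec 4 P γ) {ε b T : ℝ} (hε : 0 < ε) (hb : 1 < b) (hT : 0 < T) (ω : Ω) :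
    |Lt γ ε b T ω| ≤ Real.exp b := by
  unfold Lt
  have h1 := tau_info (P := P) hγ ε hb hT.le ω
  have hm1 := one_le_mm b (fun s => sqBessel4 γ s ω) (ta ε b T (fun s => sqBessel4 γ s ω))
  have hm2 := mm_le hb.le (fun s => sqBessel4 γ s ω) (ta ε b T (fun s => sqBessel4 γ s ω))
  generalize mm b (fun s => sqBessel4 γ s ω) (ta ε b T (fun s => sqBessel4 γ s ω)) = m at *
  generalize sqBessel4 γ (ta ε b T (fun s => sqBessel4 γ s ω)) ω = u at *
  have he := Real.exp_le_exp.2 hm2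
  unfold Lf
  have h2 : 0 ≤ (m - 1) / u ∧ (m - 1) / u ≤ 1 := by
    rcases h1 with rfl | ⟨h1, h2⟩
    · simp
    · have hu : 0 < u := by linarith
      exact ⟨div_nonneg (by linarith) hu.le, (div_le_one hu).2 h2⟩
  have h3 := Real.exp_pos m
  rw [abs_of_nonneg (mul_nonneg h3.le (by linarith [h2.2]))]
  nlinarith [h2.1]

end E

section F
variable {Ω : Type*} [mΩ : MeasurableSpace Ω] {P : Measure Ω} [IsProbabilityMeasure P]
  {γ : ℝ → Ω → EuclideanSpace ℝ (Fin 4)}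

/-- the grid values stay above `ε` -/
def Dk (γ : ℝ → Ω → EuclideanSpace ℝ (Fin 4)) (ε t0 δ : ℝ) (k : ℕ) : Set Ω :=
  {ω | ∀ j ≤ k, ε < sqBessel4 γ (t0 + j * δ) ω}

lemma Dk_past {ε t0 δ : ℝ} (h0 : 0 ≤ t0) (hδ : 0 ≤ δ) (k : ℕ) :
    MeasurableSet[pastF γ (t0 + k * δ)] (Dk γ ε t0 δ k) := by
  have : Dk γ ε t0 δ k = ⋂ j : ℕ, ⋂ _ : j ≤ k, {ω | ε < sqBessel4 γ (t0 + j * δ) ω} := by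
    ext ω; simp [Dk]
  rw [this]
  refine MeasurableSet.iInter fun j => MeasurableSet.iInter fun hj => ?_
  have hj' : (j : ℝ) ≤ k := by exact_mod_cast hj
  have h1 : Measurable[pastF γ (t0 + k * δ)] (sqBessel4 γ (t0 + j * δ)) :=
    sq_pastF (by positivity) (by gcongr)
  exact measurableSet_lt measurable_const h1

lemma phi_U_int (hγ : IsStdBMVec 4 P γ) {K : ℝ} (hK : 0 ≤ K) (t : ℝ) :
    Integrable (fun ω => phi K (sqBessel4 γ t ω)) P := by
  refine Integrable.of_bound (C := K) ?_ (Eventually.of_forall fun ω => ?_)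
  · exact ((phi_cont K).measurable.comp (sq_meas hγ t)).aestronglyMeasurable
  · exact phi_abs hK (sq_nonneg' t ω)

open Classical in
/-- stopped supermartingale -/
noncomputable def Xk (γ : ℝ → Ω → EuclideanSpace ℝ (Fin 4)) (K ε t0 δ : ℝ) (k j : ℕ) (ω : Ω) : ℝ :=
  if ω ∈ Dk γ ε t0 δ k then phi K (sqBessel4 γ (t0 + j * δ) ω) else phi K ε

lemma Xk_int (hγ : IsStdBMVec 4 P γ) {K ε t0 δ : ℝ} (hK : 0 ≤ K) (hε : 0 ≤ ε) (h0 : 0 ≤ t0)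
    (hδ : 0 ≤ δ) (k j : ℕ) : Integrable (Xk γ K ε t0 δ k j) P := by
  refine Integrable.of_bound (C := K) ?_ (Eventually.of_forall fun ω => ?_)
  · apply Measurable.aestronglyMeasurable
    unfold Xk
    exact Measurable.ite (pastF_le hγ _ _ (Dk_past h0 hδ k))
      ((phi_cont K).measurable.comp (sq_meas hγ _)) measurable_const
  · unfold Xk
    split_ifs
    · exact phi_abs hK (sq_nonneg' _ ω)
    · exact phi_abs hK hε

lemma Xk_step (hγ : IsStdBMVec 4 P γ) {K ε t0 δ : ℝ} (hK : 0 ≤ K) (hε : 0 ≤ ε) (h0 : 0 ≤ t0)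
    (hδ : 0 < δ) (k : ℕ) :
    ∫ ω, Xk γ K ε t0 δ k (k + 1) ω ∂P ≤ ∫ ω, Xk γ K ε t0 δ k k ω ∂P := by
  classical
  have ht : 0 ≤ t0 + k * δ := by positivity
  set ξ : Ω → ℝ := fun ω => if ω ∈ Dk γ ε t0 δ k then 1 else 0 with hξ
  have hξm : Measurable[pastF γ (t0 + k * δ)] ξ :=
    Measurable.ite (Dk_past h0 hδ.le k) measurable_const measurable_const
  have hξb : ∀ ω, |ξ ω| ≤ 1 := by
    intro ω; simp only [hξ]; split_ifs <;> simp
  have hξ0 : ∀ ω, 0 ≤ ξ ω := by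
    intro ω; simp only [hξ]; split_ifs <;> simp
  have hξm' : Measurable ξ := hξm.mono (pastF_le hγ _) le_rfl
  have hi : ∀ (K : ℝ), 0 ≤ K → ∀ t, Integrable (fun ω => ξ ω * phi K (sqBessel4 γ t ω)) P := by
    intro K hK t
    refine Integrable.of_bound (C := 1 * K) ?_ (Eventually.of_forall fun ω => ?_)
    · exact (hξm'.mul ((phi_cont K).measurable.comp (sq_meas hγ t))).aestronglyMeasurable
    · rw [Real.norm_eq_abs, abs_mul]
      exact mul_le_mul (hξb ω) (phi_abs hK (sq_nonneg' t ω)) (abs_nonneg _) zero_le_one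
  have hi2 : Integrable (fun ω => (1 - ξ ω) * phi K ε) P := by
    have : Integrable ξ P := Integrable.of_bound hξm'.aestronglyMeasurable 1
      (Eventually.of_forall hξb)
    exact ((integrable_const 1).sub this).mul_const _
  have hX : ∀ j, Xk γ K ε t0 δ k j
      = fun ω => ξ ω * phi K (sqBessel4 γ (t0 + j * δ) ω) + (1 - ξ ω) * phi K ε := by
    intro j; funext ω
    simp only [Xk, hξ]
    split_ifs <;> simp
  rw [hX, hX, integral_add (hi K hK _) hi2, integral_add (hi K hK _) hi2]
  have e : t0 + ((k + 1 : ℕ) : ℝ) * δ = t0 + k * δ + δ := by push_cast; ring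
  rw [e, phi_step hγ ht hδ hξm hξb hK]
  have hK' : K / (1 + 2 * K * δ) ≤ K := by
    apply div_le_self hK
    have : 0 ≤ K * δ := by positivity
    linarith
  have : ∫ ω, ξ ω * phi (K / (1 + 2 * K * δ)) (sqBessel4 γ (t0 + k * δ) ω) ∂P
      ≤ ∫ ω, ξ ω * phi K (sqBessel4 γ (t0 + k * δ) ω) ∂P := by
    apply integral_mono (hi _ (by positivity) _) (hi K hK _)
    intro ω
    exact mul_le_mul_of_nonneg_left (phi_sub_nonneg hK' _) (hξ0 ω)
  linarith

lemma Xk_le (hγ : IsStdBMVec 4 P γ) {K ε t0 δ : ℝ} (hK : 0 ≤ K) (hε : 0 ≤ ε) (h0 : 0 ≤ t0)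
    (hδ : 0 < δ) (k : ℕ) :
    ∫ ω, Xk γ K ε t0 δ k k ω ∂P ≤ ∫ ω, phi K (sqBessel4 γ t0 ω) ∂P := by
  induction k with
  | zero =>
    apply integral_mono (Xk_int hγ hK hε h0 hδ.le _ _) (phi_U_int hγ hK t0)
    intro ω
    unfold Xk
    split_ifs with h
    · simp
    · apply phi_anti hK
      simpa [Dk] using h
  | succ k ih =>
    refine le_trans ?_ ((Xk_step hγ hK hε h0 hδ k).trans ih)
    apply integral_mono (Xk_int hγ hK hε h0 hδ.le _ _) (Xk_int hγ hK hε h0 hδ.le _ _)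
    intro ω
    unfold Xk
    split_ifs with h1 h2 h2
    · exact le_rfl
    · exact absurd (fun j hj => h1 j (by omega)) h2
    · apply phi_anti hK
      by_contra! h3
      apply h1
      intro j hj
      rcases Nat.lt_or_ge j (k + 1) with h4 | h4
      · exact h2 j (by omega)
      · have : j = k + 1 := by omega
        rw [this]; exact h3
    · exact le_rfl

lemma phi_t0 (hγ : IsStdBMVec 4 P γ) {K t0 : ℝ} (hK : 0 ≤ K) (h0 : 0 < t0) :
    ∫ ω, phi K (sqBessel4 γ t0 ω) ∂P ≤ 1 / (2 * t0) := by
  have := phi_step hγ (le_refl (0:ℝ)) h0 (ξ := fun _ => 1) measurable_const (C := 1)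
    (fun _ => by simp) hK
  simp only [one_mul, zero_add] at this
  rw [this]
  simp_rw [sq_zero hγ, phi_zero]
  simp only [integral_const, probReal_univ, one_smul]
  rw [div_le_div_iff₀ (by positivity) (by positivity)]
  linarith

lemma Dk_prob (hγ : IsStdBMVec 4 P γ) {K t0 δ : ℝ} (hK : 0 < K) (h0 : 0 < t0)
    (hδ : 0 < δ) (k : ℕ) :
    P (Dk γ (1 / K) t0 δ k)ᶜ ≤ ENNReal.ofReal (1 / (K * t0)) := by
  have hε : 0 < 1 / K := by positivity
  have hD : MeasurableSet (Dk γ (1 / K) t0 δ k) := pastF_le hγ _ _ (Dk_past h0.le hδ.le k)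
  have h1 := (Xk_le hγ hK.le hε.le h0.le hδ k).trans (phi_t0 hγ hK.le h0)
  have hphi : K / 2 ≤ phi K (1 / K) := by
    rw [phi_eq hε]
    have e1 : K * (1 / K) = 1 := by field_simp
    rw [e1]
    have e2 : Real.exp (-1) ≤ 1 / 2 := by
      rw [Real.exp_neg]
      have := Real.add_one_le_exp 1
      rw [inv_eq_one_div]
      exact one_div_le_one_div_of_le (by norm_num) (by linarith)
    have e3 : (1 - Real.exp (-1)) / (1 / K) = K * (1 - Real.exp (-1)) := by field_simp
    rw [e3]
    nlinarith
  have h2 : K / 2 * P.real (Dk γ (1 / K) t0 δ k)ᶜ ≤ ∫ ω, Xk γ K (1 / K) t0 δ k k ω ∂P := by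
    have e : K / 2 * P.real (Dk γ (1 / K) t0 δ k)ᶜ
        = ∫ ω, (Dk γ (1 / K) t0 δ k)ᶜ.indicator (fun _ => K / 2) ω ∂P := by
      rw [integral_indicator_const _ hD.compl, smul_eq_mul, mul_comm]
    rw [e]
    apply integral_mono ((integrable_const _).indicator hD.compl) (Xk_int hγ hK.le hε.le h0.le hδ.le _ _)
    intro ω
    unfold Xk
    by_cases h : ω ∈ Dk γ (1 / K) t0 δ k
    · simp only [h, if_true]
      rw [indicator_of_notMem (by simpa using h)]
      exact phi_nonneg hK.le _
    · simp only [h, if_false]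
      rw [indicator_of_mem (by simpa using h)]
      exact hphi
  have h3 := h2.trans h1
  have h4 : P.real (Dk γ (1 / K) t0 δ k)ᶜ ≤ 1 / (K * t0) := by
    have : 1 / (K * t0) = (1 / (2 * t0)) / (K / 2) := by field_simp
    rw [this, le_div_iff₀ (by positivity)]
    linarith
  rw [← ENNReal.ofReal_toReal (measure_ne_top P (Dk γ (1 / K) t0 δ k)ᶜ)]
  exact ENNReal.ofReal_le_ofReal h4

lemma nohit_aux (hγ : IsStdBMVec 4 P γ) {K t0 T : ℝ} (hK : 0 < K) (h0 : 0 < t0) (hT : 0 < T) :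
    P {ω | ∃ t, t0 ≤ t ∧ t ≤ t0 + T ∧ sqBessel4 γ t ω = 0} ≤ ENNReal.ofReal (1 / (K * t0)) := by
  set A : ℕ → Set Ω := fun n => ⋂ N : ℕ, ⋂ _ : n ≤ N, (Dk γ (1 / K) t0 (T / (N + 1)) (N + 1))ᶜ
    with hA
  have hsub : {ω | ∃ t, t0 ≤ t ∧ t ≤ t0 + T ∧ sqBessel4 γ t ω = 0} ⊆ ⋃ n, A n := by
    rintro ω ⟨t, ht1, ht2, ht3⟩
    have hc : ∀ᶠ s in 𝓝 t, sqBessel4 γ s ω < 1 / K :=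
      ((sq_cont hγ ω).tendsto t).eventually (gt_mem_nhds (by rw [ht3]; positivity))
    obtain ⟨d, hd, hd2⟩ := Metric.eventually_nhds_iff.1 hc
    obtain ⟨n, hn⟩ := eventually_atTop.1 ((tend_grid T).eventually (gt_mem_nhds hd))
    simp only [mem_iUnion, hA, mem_iInter, mem_compl_iff]
    refine ⟨n, fun N hN hD => ?_⟩
    have hδ := hn N hN
    have hδ0 : 0 < T / ((N : ℝ) + 1) := by positivity
    have hx0 : 0 ≤ (t - t0) / (T / ((N : ℝ) + 1)) := div_nonneg (by linarith) hδ0.le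
    have f1 := Nat.floor_le hx0
    have f2 := Nat.lt_floor_add_one ((t - t0) / (T / ((N : ℝ) + 1)))
    rw [le_div_iff₀ hδ0] at f1
    rw [div_lt_iff₀ hδ0] at f2
    have f3 : ⌊(t - t0) / (T / ((N : ℝ) + 1))⌋₊ ≤ N + 1 := by
      apply Nat.floor_le_of_le
      rw [div_le_iff₀ hδ0]
      push_cast
      have : ((N : ℝ) + 1) * (T / ((N : ℝ) + 1)) = T := by field_simp
      linarith
    have f4 := hD _ f3
    have f5 := @hd2 (t0 + ⌊(t - t0) / (T / ((N : ℝ) + 1))⌋₊ * (T / ((N : ℝ) + 1))) (by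
      rw [Real.dist_eq, abs_lt]
      constructor <;> linarith)
    linarith
  refine (measure_mono hsub).trans ?_
  have hmono : Monotone A := by
    intro m n hmn ω hω
    simp only [hA, mem_iInter] at hω ⊢
    exact fun N hN => hω N (hmn.trans hN)
  rw [hmono.measure_iUnion]
  refine iSup_le fun n => ?_
  refine (measure_mono ?_).trans (Dk_prob hγ hK h0 (by positivity : 0 < T / ((n : ℝ) + 1)) (n + 1))
  exact iInter₂_subset n le_rfl

lemma nohit_null (hγ : IsStdBMVec 4 P γ) {t0 T : ℝ} (h0 : 0 < t0) (hT : 0 < T) :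
    P {ω | ∃ t, t0 ≤ t ∧ t ≤ t0 + T ∧ sqBessel4 γ t ω = 0} = 0 := by
  have h1 : Tendsto (fun n : ℕ => ENNReal.ofReal (1 / (((n : ℝ) + 1) * t0))) atTop (𝓝 0) := by
    have := ENNReal.tendsto_ofReal (tend_grid (1 / t0))
    rw [ENNReal.ofReal_zero] at this
    refine this.congr fun n => ?_
    congr 1
    field_simp
  exact le_antisymm (ge_of_tendsto h1 (Eventually.of_forall fun n =>
    nohit_aux hγ (by positivity) h0 hT)) zero_le

lemma ae_pos (hγ : IsStdBMVec 4 P γ) : ∀ᵐ ω ∂P, ∀ t, 0 < t → 0 < sqBessel4 γ t ω := by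
  have h : ∀ n : ℕ, ∀ᵐ ω ∂P, ¬ ∃ t, 1 / ((n : ℝ) + 1) ≤ t ∧ t ≤ 1 / ((n : ℝ) + 1) + ((n : ℝ) + 1) ∧
      sqBessel4 γ t ω = 0 := by
    intro n
    rw [ae_iff]
    simp only [not_not]
    exact nohit_null hγ (by positivity) (by positivity)
  filter_upwards [ae_all_iff.2 h] with ω hω t ht
  rcases (sq_nonneg' (γ := γ) t ω).eq_or_lt with he | he
  · exfalso
    obtain ⟨n, hn⟩ := exists_nat_one_div_lt ht
    obtain ⟨k, hk⟩ := exists_nat_ge t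
    refine hω (max n k) ⟨t, ?_, ?_, he.symm⟩
    · refine le_trans ?_ hn.le
      have : (n : ℝ) ≤ (max n k : ℕ) := by exact_mod_cast le_max_left _ _
      gcongr
    · have : (k : ℝ) ≤ (max n k : ℕ) := by exact_mod_cast le_max_right _ _
      have : 0 ≤ 1 / (((max n k : ℕ) : ℝ) + 1) := by positivity
      linarith
  · exact he

lemma laplace0 (hγ : IsStdBMVec 4 P γ) {t : ℝ} (ht : 0 < t) :
    ∫ ω, Real.exp (-sqBessel4 γ t ω) ∂P = ((1 + 2 * t) ^ 2)⁻¹ := by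
  have := laplace_step hγ (le_refl (0:ℝ)) ht (ξ := fun _ => 1) measurable_const (C := 1)
    (fun _ => by simp) (zero_le_one (α := ℝ))
  simp only [one_mul, zero_add, sq_zero hγ, mul_zero, neg_zero, Real.exp_zero, mul_one,
    integral_const, probReal_univ, one_smul] at this
  exact this

lemma unb_null (hγ : IsStdBMVec 4 P γ) (c : ℝ) : P {ω | ∀ t, 0 ≤ t → sqBessel4 γ t ω < c} = 0 := by
  have h2 : ∀ n : ℕ, P {ω | ∀ t, 0 ≤ t → sqBessel4 γ t ω < c}
      ≤ ENNReal.ofReal (Real.exp c / ((n : ℝ) + 1)) := by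
    intro n
    have ht : (0:ℝ) < n + 1 := by positivity
    have hint : Integrable (fun ω => Real.exp (-sqBessel4 γ ((n:ℝ) + 1) ω)) P := by
      refine Integrable.of_bound (C := 1)
        ((sq_meas hγ _).neg.exp).aestronglyMeasurable (Eventually.of_forall fun ω => ?_)
      rw [Real.norm_eq_abs, abs_of_pos (Real.exp_pos _), Real.exp_le_one_iff]
      linarith [sq_nonneg' (γ := γ) ((n:ℝ) + 1) ω]
    have h3 := mul_meas_ge_le_integral_of_nonneg
      (Eventually.of_forall fun ω => (Real.exp_pos (-sqBessel4 γ ((n:ℝ) + 1) ω)).le) hint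
      (Real.exp (-c))
    rw [laplace0 hγ ht] at h3
    set B := {ω | Real.exp (-c) ≤ Real.exp (-sqBessel4 γ ((n:ℝ) + 1) ω)} with hB
    have hsub : {ω | ∀ t, 0 ≤ t → sqBessel4 γ t ω < c} ⊆ B := by
      intro ω hω
      simp only [hB, mem_ofPred_eq, Real.exp_le_exp] at hω ⊢
      linarith [hω ((n:ℝ) + 1) ht.le]
    refine (measure_mono hsub).trans ?_
    rw [← ENNReal.ofReal_toReal (measure_ne_top P B)]
    apply ENNReal.ofReal_le_ofReal
    have h4 : ((1 + 2 * ((n : ℝ) + 1)) ^ 2)⁻¹ ≤ ((n : ℝ) + 1)⁻¹ := by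
      gcongr
      nlinarith
    have h5 : Real.exp (-c) * P.real B ≤ ((n : ℝ) + 1)⁻¹ := h3.trans h4
    rw [Real.exp_neg, inv_mul_le_iff₀ (Real.exp_pos c)] at h5
    rw [div_eq_mul_inv]
    exact h5
  have h1 : Tendsto (fun n : ℕ => ENNReal.ofReal (Real.exp c / ((n : ℝ) + 1))) atTop (𝓝 0) := by
    have := ENNReal.tendsto_ofReal (tend_grid (Real.exp c))
    rwa [ENNReal.ofReal_zero] at this
  exact le_antisymm (ge_of_tendsto h1 (Eventually.of_forall h2)) zero_le

lemma ae_unb (hγ : IsStdBMVec 4 P γ) : ∀ᵐ ω ∂P, ∀ c : ℝ, ∃ t, 0 ≤ t ∧ c ≤ sqBessel4 γ t ω := by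
  have h : ∀ n : ℕ, ∀ᵐ ω ∂P, ¬ ∀ t, 0 ≤ t → sqBessel4 γ t ω < (n : ℝ) := by
    intro n
    rw [ae_iff]
    simp only [not_not]
    exact unb_null hγ _
  filter_upwards [ae_all_iff.2 h] with ω hω c
  obtain ⟨n, hn⟩ := exists_nat_ge c
  have := hω n
  push Not at this
  obtain ⟨t, ht, h2⟩ := this
  exact ⟨t, ht, hn.trans h2⟩

end F

/-- the path reaches `b` before the first drawdown of size one -/
def RR (b : ℝ) (f : ℝ → ℝ) : Prop :=
  ∃ t, 0 ≤ t ∧ b ≤ f t ∧ ∀ s, 0 ≤ s → s ≤ t → rM f s - f s < 1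

open Classical in
lemma path_key {f : ℝ → ℝ} (hf : Continuous f) (h0 : f 0 = 0) (hpos : ∀ t, 0 < t → 0 < f t)
    {b : ℝ} (hb : 1 < b) (hunb : ∃ t, 0 ≤ t ∧ b ≤ f t) :
    ∃ ε0 > 0, ∃ T0 : ℝ, ∀ ε T, 0 < ε → ε < ε0 → T0 < T →
      Lf (mm b f (ta ε b T f)) (f (ta ε b T f)) = if RR b f then Real.exp b / b else 0 := by
  set S := {t | 0 ≤ t ∧ b ≤ f t} with hS
  have hSc : IsClosed S := by
    have e : S = {t | 0 ≤ t} ∩ {t | b ≤ f t} := by ext t; simp [hS]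
    rw [e]
    exact (isClosed_le continuous_const continuous_id).inter (isClosed_le continuous_const hf)
  have hSb : BddBelow S := ⟨0, fun _ h => h.1⟩
  obtain ⟨tb, htb⟩ : ∃ tb, tb = sInf S := ⟨_, rfl⟩
  have hmem : 0 ≤ tb ∧ b ≤ f tb := by rw [htb]; exact hSc.csInf_mem hunb hSb
  have hlt : ∀ s, 0 ≤ s → s < tb → f s < b := by
    intro s hs hst
    by_contra! h
    exact absurd (csInf_le hSb ⟨hs, h⟩) (by rw [← htb]; exact not_le.2 hst)
  have hfb : f tb = b := by
    apply le_antisymm _ hmem.2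
    by_contra! h
    obtain ⟨s, hs, hs2⟩ := intermediate_value_Icc hmem.1 hf.continuousOn
      (show b ∈ Icc (f 0) (f tb) from ⟨by rw [h0]; linarith, h.le⟩)
    have hne : s ≠ tb := by rintro rfl; linarith
    have := hlt s hs.1 (lt_of_le_of_ne hs.2 hne)
    linarith
  have hle : ∀ s, 0 ≤ s → s ≤ tb → f s ≤ b := by
    intro s hs hst
    rcases hst.eq_or_lt with h | h
    · rw [h, hfb]
    · exact (hlt s hs h).le
  have hMb : rM f tb = b := by
    apply le_antisymm
    · obtain ⟨s, h1, h2, h3⟩ := rM_att hf hmem.1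
      rw [← h3]; exact hle s h1 h2
    · rw [← hfb]; exact le_rM hf hmem.1 le_rfl
  have hMlt : ∀ s, 0 ≤ s → s < tb → rM f s < b := by
    intro s hs hst
    obtain ⟨r, h1, h2, h3⟩ := rM_att hf hs
    rw [← h3]; exact hlt r h1 (h2.trans_lt hst)
  have hmm : ∀ s, 0 ≤ s → s ≤ tb → 1 ≤ rM f s → mm b f s = rM f s := by
    intro s hs hst h1
    have : rM f s ≤ b := by rw [← hMb]; exact rM_mono hf hs hst
    unfold mm
    rw [min_eq_left this, max_eq_right h1]
  obtain ⟨ε0, hε0, hmin⟩ : ∃ ε0 > 0, ∀ s, 0 ≤ s → s ≤ tb → 1 ≤ rM f s → ε0 ≤ f s := by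
    have hQ : IsCompact (Icc 0 tb ∩ {s | 1 ≤ rM f s}) :=
      isCompact_Icc.inter_right (isClosed_le continuous_const (rM_cont hf))
    rcases (Icc 0 tb ∩ {s | 1 ≤ rM f s}).eq_empty_or_nonempty with he | hne
    · refine ⟨1, one_pos, fun s h1 h2 h3 => ?_⟩
      have : s ∈ Icc 0 tb ∩ {s | 1 ≤ rM f s} := ⟨⟨h1, h2⟩, h3⟩
      rw [he] at this
      exact absurd this (notMem_empty s)
    · obtain ⟨x, hx, hx2⟩ := hQ.exists_isMinOn hne hf.continuousOn
      refine ⟨f x, ?_, fun s h1 h2 h3 => hx2 ⟨⟨h1, h2⟩, h3⟩⟩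
      apply hpos
      rcases hx.1.1.eq_or_lt with h | h
      · exfalso
        have h5 : 1 ≤ rM f x := hx.2
        rw [← h, rM_zero hf, h0] at h5
        linarith
      · exact h
  refine ⟨ε0, hε0, tb, fun ε T hε hεε hT => ?_⟩
  have hT0 : 0 ≤ T := hmem.1.trans hT.le
  have hVb : VV ε b f tb ≤ 0 := by
    unfold VV
    rw [hMb]
    exact (min_le_left _ _).trans (by simp)
  obtain ⟨hτ0, hτ1⟩ := ta_mem (ε := ε) (b := b) hf hT0
  have hτ2 : ta ε b T f ≤ tb := csInf_le ta_bdd ⟨hmem.1, Or.inr hVb⟩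
  have hτV : VV ε b f (ta ε b T f) = 0 := by
    rcases hτ1 with h | h
    · linarith
    · exact le_antisymm h (VV_ta hf h0 (by linarith) hT0)
  have hτm : ∀ s, 0 ≤ s → VV ε b f s ≤ 0 → ta ε b T f ≤ s :=
    fun s hs h => csInf_le ta_bdd ⟨hs, Or.inr h⟩
  generalize ta ε b T f = τ at *
  split_ifs with hR
  · obtain ⟨t, ht0, ht1, ht2⟩ := hR
    have htt : tb ≤ t := by rw [htb]; exact csInf_le hSb ⟨ht0, ht1⟩
    have : τ = tb := by
      by_contra hne
      have hlt' := lt_of_le_of_ne hτ2 hne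
      have h1 := hMlt τ hτ0 hlt'
      have h2 := ht2 τ hτ0 (hτ2.trans htt)
      have : 0 < VV ε b f τ := by
        unfold VV
        rw [lt_min_iff, lt_max_iff]
        refine ⟨by linarith, ?_⟩
        rcases lt_or_ge (rM f τ) 1 with h3 | h3
        · left; linarith
        · right
          rw [hmm τ hτ0 hτ2 h3]
          have := hmin τ hτ0 hτ2 h3
          have : max (rM f τ - 1) ε < f τ := max_lt (by linarith) (by linarith)
          linarith
      linarith
    rw [this, hmm tb hmem.1 le_rfl (by rw [hMb]; exact hb.le), hMb, hfb]
    unfold Lf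
    field_simp
    ring
  · have hex : ∃ s, 0 ≤ s ∧ s ≤ tb ∧ 1 ≤ rM f s - f s := by
      by_contra! h
      exact hR ⟨tb, hmem.1, hmem.2, h⟩
    obtain ⟨s, hs0, hs1, hs2⟩ := hex
    have hfp : ∀ s, 0 ≤ s → 0 ≤ f s := by
      intro s hs
      rcases hs.eq_or_lt with h | h
      · rw [← h, h0]
      · exact (hpos s h).le
    have hfs := hfp s hs0
    have hst : s < tb := by
      apply lt_of_le_of_ne hs1
      rintro rfl
      rw [hMb, hfb] at hs2
      linarith
    have hτs : τ ≤ s := by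
      apply hτm s hs0
      unfold VV
      refine (min_le_right _ _).trans (max_le (by linarith) ?_)
      rw [hmm s hs0 hs1 (by linarith)]
      have := le_max_left (rM f s - 1) ε
      linarith
    have h1 := hMlt τ hτ0 (hτs.trans_lt hst)
    have h2 : max (1 - rM f τ) (f τ - max (mm b f τ - 1) ε) = 0 := by
      unfold VV at hτV
      rcases min_choice (b - rM f τ) (max (1 - rM f τ) (f τ - max (mm b f τ - 1) ε)) with h | h
      · linarith
      · linarith
    have h3 : 1 ≤ rM f τ := by
      have := le_max_left (1 - rM f τ) (f τ - max (mm b f τ - 1) ε)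
      linarith
    have h4 := hmin τ hτ0 hτ2 h3
    have hme := hmm τ hτ0 hτ2 h3
    rw [hme] at h2 ⊢
    have h5 : f τ = rM f τ - 1 := by
      rcases max_choice (1 - rM f τ) (f τ - max (rM f τ - 1) ε) with h | h
      · have h6 := le_max_right (1 - rM f τ) (f τ - max (rM f τ - 1) ε)
        have h7 : rM f τ = 1 := by linarith
        have h8 : max (rM f τ - 1) ε ≤ ε := max_le (by linarith) le_rfl
        linarith
      · rw [h] at h2
        rcases max_choice (rM f τ - 1) ε with h6 | h6
        · linarith
        · linarith
    unfold Lf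
    rw [← h5, div_self (by linarith)]
    simp

section G
variable {Ω : Type*} [mΩ : MeasurableSpace Ω] {P : Measure Ω} [IsProbabilityMeasure P]
  {γ : ℝ → Ω → EuclideanSpace ℝ (Fin 4)}

lemma RR_prob (hγ : IsStdBMVec 4 P γ) {b : ℝ} (hb : 1 < b) :
    P {ω | RR b (fun s => sqBessel4 γ s ω)} = ENNReal.ofReal (b * Real.exp (-(b - 1))) := by
  classical
  set R := {ω | RR b (fun s => sqBessel4 γ s ω)} with hR
  set L : ℕ → Ω → ℝ := fun n => Lt γ (1 / ((n : ℝ) + 1)) b ((n : ℝ) + 1) with hL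
  have hp1 : ∀ n : ℕ, (0:ℝ) < 1 / ((n : ℝ) + 1) := fun n => by positivity
  have hp2 : ∀ n : ℕ, (0:ℝ) < (n : ℝ) + 1 := fun n => by positivity
  have hlim : ∀ᵐ ω ∂P, Tendsto (fun n => L n ω) atTop
      (𝓝 (R.indicator (fun _ => Real.exp b / b) ω)) := by
    filter_upwards [ae_pos hγ, ae_unb hγ] with ω h1 h2
    obtain ⟨ε0, hε0, T0, hk⟩ := path_key (sq_cont hγ ω) (sq_zero hγ ω) h1 hb (h2 b)
    apply tendsto_const_nhds.congr'
    have e1 := (tend_grid 1).eventually (gt_mem_nhds hε0)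
    have e2 := (tendsto_natCast_atTop_atTop (R := ℝ)).eventually (eventually_gt_atTop T0)
    filter_upwards [e1, e2] with n h3 h4
    have := hk (1 / ((n : ℝ) + 1)) ((n : ℝ) + 1) (hp1 n) h3 (by linarith)
    simp only [hL, Lt]
    rw [this]
    simp only [indicator, hR, mem_ofPred_eq]
  have hmeas : AEStronglyMeasurable (R.indicator (fun _ => Real.exp b / b)) P :=
    aestronglyMeasurable_of_tendsto_ae atTop
      (fun n => (Lt_meas hγ (hp1 n) hb (hp2 n)).aestronglyMeasurable) hlim
  have hRn : NullMeasurableSet R P := by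
    have : R = (R.indicator (fun _ => Real.exp b / b)) ⁻¹' (Ioi 0) := by
      ext ω
      by_cases h : ω ∈ R
      · simp only [h, mem_preimage, indicator_of_mem, mem_Ioi, true_iff]
        positivity
      · simp [h]
    rw [this]
    exact hmeas.aemeasurable.nullMeasurable measurableSet_Ioi
  have hint : Tendsto (fun n => ∫ ω, L n ω ∂P) atTop
      (𝓝 (∫ ω, R.indicator (fun _ => Real.exp b / b) ω ∂P)) :=
    tendsto_integral_of_dominated_convergence (fun _ => Real.exp b)
      (fun n => (Lt_meas hγ (hp1 n) hb (hp2 n)).aestronglyMeasurable) (integrable_const _)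
      (fun n => Eventually.of_forall fun ω => Lt_abs hγ (hp1 n) hb (hp2 n) ω) hlim
  have hI : ∫ ω, R.indicator (fun _ => Real.exp b / b) ω ∂P = Real.exp 1 := by
    refine tendsto_nhds_unique hint ?_
    simp_rw [hL, fun n : ℕ => Lt_int hγ (hp1 n) hb (hp2 n)]
    exact tendsto_const_nhds
  rw [integral_indicator₀ hRn, setIntegral_const, smul_eq_mul] at hI
  rw [← ENNReal.ofReal_toReal (measure_ne_top P R)]
  congr 1
  have h3 : P.real R = b * Real.exp (-(b - 1)) := by
    have e : Real.exp (-(b - 1)) = Real.exp 1 / Real.exp b := by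
      rw [← Real.exp_sub]; congr 1; ring
    rw [e, ← hI]
    field_simp
  exact h3

lemma E_sub (hγ : IsStdBMVec 4 P γ) {b : ℝ} (hb : 1 < b) (ω : Ω)
    (h : b < runMax (sqBessel4 γ) (ddTime 1 (sqBessel4 γ) ω) ω) :
    RR b (fun s => sqBessel4 γ s ω) := by
  have hc := sq_cont hγ ω
  have h0 : 0 ≤ ddTime 1 (sqBessel4 γ) ω := Real.sInf_nonneg fun _ h => h.1
  have hbd : BddBelow {t | 0 ≤ t ∧ 1 ≤ runMax (sqBessel4 γ) t ω - sqBessel4 γ t ω} :=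
    ⟨0, fun _ h => h.1⟩
  have hlt : ∀ r, 0 ≤ r → r < ddTime 1 (sqBessel4 γ) ω →
      rM (fun s => sqBessel4 γ s ω) r - sqBessel4 γ r ω < 1 := by
    intro r hr hr2
    have := notMem_of_lt_csInf hr2 hbd
    simp only [mem_ofPred_eq, not_and, not_le] at this
    rw [← runMax_eq hc hr]
    exact this hr
  rw [runMax_eq hc h0] at h
  obtain ⟨s, hs0, hs1, hs2⟩ := rM_att hc h0
  refine ⟨s, hs0, h.le.trans hs2.ge, fun r hr hrs => ?_⟩
  rcases (hrs.trans hs1).eq_or_lt with he | hl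
  · have : s = r := le_antisymm (by rw [he]; exact hs1) hrs
    rw [this] at hs2
    rw [he] at hs2 ⊢
    have h5 := hs2.ge
    show rM (fun s => sqBessel4 γ s ω) _ - sqBessel4 γ _ ω < 1
    linarith
  · exact hlt r hr hl

lemma sub_E (hγ : IsStdBMVec 4 P γ) {b b' : ℝ} (hbb : b < b') (ω : Ω)
    (hne : ∃ t, 0 ≤ t ∧ 1 ≤ runMax (sqBessel4 γ) t ω - sqBessel4 γ t ω)
    (h : RR b' (fun s => sqBessel4 γ s ω)) :
    b < runMax (sqBessel4 γ) (ddTime 1 (sqBessel4 γ) ω) ω := by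
  have hc := sq_cont hγ ω
  have h0 : 0 ≤ ddTime 1 (sqBessel4 γ) ω := Real.sInf_nonneg fun _ h => h.1
  obtain ⟨t, ht0, ht1, ht2⟩ := h
  have : t ≤ ddTime 1 (sqBessel4 γ) ω := by
    apply le_csInf hne
    rintro s ⟨hs0, hs1⟩
    by_contra! hst
    have := ht2 s hs0 hst.le
    rw [runMax_eq hc hs0] at hs1
    linarith
  rw [runMax_eq hc h0]
  exact hbb.trans_le (ht1.trans (le_rM hc ht0 this))

lemma dd_null (hγ : IsStdBMVec 4 P γ) :
    ∀ᵐ ω ∂P, ∃ t, 0 ≤ t ∧ 1 ≤ runMax (sqBessel4 γ) t ω - sqBessel4 γ t ω := by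
  rw [ae_iff]
  set Z := {ω | ¬ ∃ t, 0 ≤ t ∧ 1 ≤ runMax (sqBessel4 γ) t ω - sqBessel4 γ t ω} with hZ
  have h1 : ∀ n : ℕ, P Z ≤ ENNReal.ofReal (((n : ℝ) + 2) * Real.exp (-(((n : ℝ) + 2) - 1))) := by
    intro n
    rw [← RR_prob hγ (by linarith [n.cast_nonneg (α := ℝ)] : (1:ℝ) < n + 2)]
    apply measure_mono_ae
    filter_upwards [ae_unb hγ] with ω h2 h3
    obtain ⟨t, ht, ht2⟩ := h2 ((n : ℝ) + 2)
    refine ⟨t, ht, ht2, fun s hs _ => ?_⟩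
    have h4 : ¬ ∃ t, 0 ≤ t ∧ 1 ≤ runMax (sqBessel4 γ) t ω - sqBessel4 γ t ω := h3
    push Not at h4
    rw [← runMax_eq (sq_cont hγ ω) hs]
    exact h4 s hs
  have h2 : Tendsto (fun n : ℕ => ENNReal.ofReal (((n : ℝ) + 2) *
      Real.exp (-(((n : ℝ) + 2) - 1)))) atTop (𝓝 0) := by
    have h3 : Tendsto (fun n : ℕ => (n : ℝ) + 2) atTop atTop :=
      tendsto_atTop_add_const_right _ _ tendsto_natCast_atTop_atTop
    have h4 := ((Real.tendsto_pow_mul_exp_neg_atTop_nhds_zero 1).comp h3).const_mul (Real.exp 1)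
    rw [mul_zero] at h4
    have h5 := ENNReal.tendsto_ofReal h4
    rw [ENNReal.ofReal_zero] at h5
    refine h5.congr fun n => ?_
    congr 1
    simp only [Function.comp, pow_one]
    have e : Real.exp (-(((n : ℝ) + 2) - 1)) = Real.exp 1 * Real.exp (-((n : ℝ) + 2)) := by
      rw [← Real.exp_add]; congr 1; ring
    rw [e]; ring
  exact le_antisymm (ge_of_tendsto h2 (Eventually.of_forall h1)) zero_le

end G

/-- for a squared four-dimensional Bessel process `U` started at `0` and
`τ₁ := inf {t ≥ 0 : Ū(t) - U(t) ≥ 1}`, one has `P{Ū(τ₁) > b} = b e^{-(b-1)}` for all `b > 1`. -/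
theorem sqBessel4_runMax_at_drawdown_time_law
    {Ω : Type*} [MeasurableSpace Ω] (P : Measure Ω) [IsProbabilityMeasure P]
    (γ : ℝ → Ω → EuclideanSpace ℝ (Fin 4)) (hγ : IsStdBMVec 4 P γ)
    (b : ℝ) (hb : 1 < b) :
    P {ω | b < runMax (sqBessel4 γ) (ddTime 1 (sqBessel4 γ) ω) ω}
      = ENNReal.ofReal (b * Real.exp (-(b - 1))) := by
  apply le_antisymm
  · rw [← RR_prob hγ hb]
    exact measure_mono fun ω h => E_sub hγ hb ω h
  · have h1 : ∀ n : ℕ, ENNReal.ofReal ((b + 1 / ((n : ℝ) + 1)) *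
        Real.exp (-((b + 1 / ((n : ℝ) + 1)) - 1)))
        ≤ P {ω | b < runMax (sqBessel4 γ) (ddTime 1 (sqBessel4 γ) ω) ω} := by
      intro n
      have hn : (0:ℝ) < 1 / ((n : ℝ) + 1) := by positivity
      rw [← RR_prob hγ (by linarith : (1:ℝ) < b + 1 / ((n : ℝ) + 1))]
      apply measure_mono_ae
      filter_upwards [dd_null hγ] with ω h2 h3
      exact sub_E hγ (by linarith) ω h2 h3
    have h2 : Tendsto (fun n : ℕ => b + 1 / ((n : ℝ) + 1)) atTop (nhds b) := by
      simpa using tendsto_const_nhds.add (tend_grid 1)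
    have hc : Continuous fun x : ℝ => x * Real.exp (-(x - 1)) := by fun_prop
    have h3 := ENNReal.tendsto_ofReal ((hc.tendsto b).comp h2)
    exact le_of_tendsto h3 (Eventually.of_forall h1)
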